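/- arXiv:2204.05974 — 6 statements merged into one kernel-verified Lean document; each statement's English description precedes it below -/
import Mathlib

section
/- Let X be a totally disconnected Tychonoff space. Then the following are equivalent: (a) C_p(X, ℕ) is a Baire space; (b) there exists a complete metric space M that is non-compact and zero-dimensional (has a base consisting of clopen sets) such that C_p(X, M) is a Baire space; (c) C_p(X, K) is a Baire space for every complete metric space K. -/
open Set Topology

/-- `Cp X Y` : continuous functions from `X` to `Y` with the topology of pointwise
convergence, i.e. the subspace topology inherited from the product space `Y^X`. -/
abbrev Cp (X Y : Type*) [TopologicalSpace X] [TopologicalSpace Y] : Type _ :=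
  {f : X → Y // Continuous f}

/-!
If `M` is not compact and has a clopen base, `M` maps continuously onto `ℕ`, and postcomposition
with this map is an open quotient map `C_p(X, M) → C_p(X, ℕ)`, along which the Baire property
descends.

Conversely, suppose that `C_p(X, ℕ)` is Baire, that `K` is complete and that `G n` are decreasing
dense open subsets of `C_p(X, K)`. A finite set of points of `X` and a finite set of values in `K`
carry only finitely many patterns, so increasing finite sets `S n` of points can be fixed in
advance such that every pattern on `S n` can be perturbed, by an amount halving with `n`, to a
pattern on `S (n + 1)` that forces membership in `G n`. Since every point lies in at most one
`S (n + 1) \ S n`, the Baire property of `C_p(X, ℕ)` yields a continuous `f : X → ℕ` that equals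
`n` on `S (n + 1) \ S n` for infinitely many `n`. Correct a locally constant function at these
stages `n` only, making large changes only on the clopen set `f ⁻¹' {n}`. Then each point sees at
most one large change, the same one throughout a neighbourhood, so the functions converge locally
uniformly; the limit lies in infinitely many `G n`, hence in all of them.
-/

open Filter Function TopologicalSpace

universe u v

section Sequences

theorem exists_seq_of_forall_exists_succ {α : Type*} {I : ℕ → α → Prop} {R : ℕ → α → α → Prop}
    {a : α} (ha : I 0 a) (step : ∀ n x, I n x → ∃ y, I (n + 1) y ∧ R n x y) :
    ∃ s : ℕ → α, s 0 = a ∧ (∀ n, I n (s n)) ∧ ∀ n, R n (s n) (s (n + 1)) := by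
  choose! next next_mem next_rel using step
  let s : ℕ → α := Nat.rec a next
  have hs : ∀ n, I n (s n) := Nat.rec ha fun n hn => next_mem n _ hn
  exact ⟨s, rfl, hs, fun n => next_rel n _ (hs n)⟩

theorem eventually_notMem_succ_sdiff {α : Type*} {s : ℕ → Set α} (hs : Monotone s) (x : α) :
    ∀ᶠ n in atTop, x ∉ s (n + 1) \ s n := by
  by_cases hx : ∃ m, x ∈ s m
  · obtain ⟨m, hm⟩ := hx
    filter_upwards [eventually_ge_atTop m] with n hn hxn
    exact hxn.2 (hs hn hm)
  · exact .of_forall fun n hxn => hx ⟨n + 1, hxn.1⟩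

variable {K : Type*} [PseudoMetricSpace K] {u : ℕ → K} {ε : ℕ → ℝ} {N : ℕ}

theorem le_div_two_pow_of_succ_le_half (hε : ∀ n, ε (n + 1) ≤ ε n / 2) (n k : ℕ) :
    ε (n + k) ≤ ε n / 2 ^ k := by
  have h := le_geom (u := fun k => ε (n + k)) (c := 2⁻¹) (by norm_num) k fun j _ => by
    rw [← add_assoc, inv_mul_eq_div]
    exact hε (n + j)
  rwa [inv_pow, inv_mul_eq_div] at h

theorem dist_shift_succ_le_geometric (hε : ∀ n, ε (n + 1) ≤ ε n / 2)
    (hu : ∀ n ≥ N, dist (u n) (u (n + 1)) ≤ ε n) (k : ℕ) :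
    dist (u (k + N)) (u (k + 1 + N)) ≤ 2 * ε N / 2 / 2 ^ k := by
  rw [mul_div_cancel_left₀ _ two_ne_zero, add_right_comm]
  refine (hu (k + N) (Nat.le_add_left N k)).trans ?_
  rw [add_comm k N]
  exact le_div_two_pow_of_succ_le_half hε N k

theorem cauchySeq_of_dist_succ_le_halving (hε : ∀ n, ε (n + 1) ≤ ε n / 2)
    (hu : ∀ n ≥ N, dist (u n) (u (n + 1)) ≤ ε n) : CauchySeq u :=
  (cauchySeq_shift N).1 <| cauchySeq_of_le_geometric_two <| dist_shift_succ_le_geometric hε hu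

theorem dist_le_two_mul_of_tendsto_of_halving (hε : ∀ n, ε (n + 1) ≤ ε n / 2)
    (hu : ∀ n ≥ N, dist (u n) (u (n + 1)) ≤ ε n) {a : K} (ha : Tendsto u atTop (𝓝 a)) :
    dist (u N) a ≤ 2 * ε N := by
  simpa only [zero_add] using dist_le_of_le_geometric_two_of_tendsto₀
    (f := fun k => u (k + N)) (dist_shift_succ_le_geometric hε hu)
    ((tendsto_add_atTop_iff_nat N).2 ha)

theorem exists_continuous_limit_of_locally_halving {X : Type*} [TopologicalSpace X]
    [CompleteSpace K] {u : ℕ → X → K} (hε : ∀ n, ε (n + 1) ≤ ε n / 2)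
    (hu : ∀ n, Continuous (u n))
    (hloc : ∀ x, ∃ N, ∀ᶠ y in 𝓝 x, ∀ n ≥ N, dist (u n y) (u (n + 1) y) ≤ ε n) :
    ∃ l : X → K, Continuous l ∧ ∀ x, Tendsto (fun n => u n x) atTop (𝓝 (l x)) := by
  have hlim : ∀ x, ∃ a, Tendsto (fun n => u n x) atTop (𝓝 a) := fun x => by
    obtain ⟨N, hN⟩ := hloc x
    exact cauchySeq_tendsto_of_complete (cauchySeq_of_dist_succ_le_halving hε hN.self_of_nhds)
  choose l hl using hlim
  have hε_lim : Tendsto (fun n => 2 * (ε 0 / 2 ^ n)) atTop (𝓝 0) := by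
    simpa using (tendsto_const_nhds.div_atTop
      (tendsto_pow_atTop_atTop_of_one_lt (one_lt_two (α := ℝ)))).const_mul 2
  have hunif : TendstoLocallyUniformly u l atTop := by
    refine Metric.tendstoLocallyUniformly_iff.2 fun δ hδ x => ?_
    obtain ⟨N, hN⟩ := hloc x
    refine ⟨_, hN, ?_⟩
    filter_upwards [eventually_ge_atTop N, hε_lim.eventually_lt_const hδ] with n hn hnδ y hy
    calc dist (l y) (u n y) = dist (u n y) (l y) := dist_comm _ _
      _ ≤ 2 * ε n :=
        dist_le_two_mul_of_tendsto_of_halving hε (fun m hm => hy m (hn.trans hm)) (hl y)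
      _ ≤ 2 * (ε 0 / 2 ^ n) := by
        simpa using le_div_two_pow_of_succ_le_half hε 0 n
      _ < δ := hnδ
  exact ⟨l, hunif.continuous (Frequently.of_forall hu), hl⟩

end Sequences

section NoncompactZeroDimensional

variable {M : Type*}

theorem exists_seq_locallyFinite_ball [PseudoMetricSpace M] (hM : ¬ CompactSpace M) :
    ∃ s : ℕ → M, LocallyFinite fun n : ℕ => Metric.ball (s n) (1 / (n + 1)) := by
  obtain ⟨s, hs⟩ : ∃ s : ℕ → M, ∀ x, ¬ MapClusterPt x atTop s := by
    by_contra! h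
    refine hM (compactSpace_iff_seqCompactSpace.2 ⟨fun s _ => ?_⟩)
    obtain ⟨x, hx⟩ := h s
    exact ⟨x, mem_univ x, hx.tendsto_subseq⟩
  refine ⟨s, fun x => ?_⟩
  obtain ⟨r, hr, hfar⟩ : ∃ r > 0, ∀ᶠ n in atTop, s n ∉ Metric.ball x r := by
    simpa only [Metric.nhds_basis_ball.mapClusterPt_iff_frequently, not_forall, not_frequently,
      exists_prop] using hs x
  refine ⟨_, Metric.ball_mem_nhds x (half_pos hr), ?_⟩
  have hsmall := tendsto_one_div_add_atTop_nhds_zero_nat.eventually_lt_const (half_pos hr)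
  have hdisj : ∀ᶠ n : ℕ in atTop,
      ¬ (Metric.ball (s n) (1 / (n + 1)) ∩ Metric.ball x (r / 2)).Nonempty := by
    filter_upwards [hfar, hsmall] with n hn hnr
    rintro ⟨y, hys, hyx⟩
    refine hn (Metric.mem_ball.2 ?_)
    linarith [dist_triangle_left (s n) x y, Metric.mem_ball.1 hys, Metric.mem_ball.1 hyx]
  rw [← Nat.cofinite_eq_atTop, eventually_cofinite] at hdisj
  simpa only [not_not] using hdisj

theorem exists_continuous_nat_infinite_range [TopologicalSpace M] {U : ℕ → Set M}
    (hU : LocallyFinite U) (hclopen : ∀ n, IsClopen (U n)) (hne : ∀ n, (U n).Nonempty) :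
    ∃ p : M → ℕ, Continuous p ∧ (range p).Infinite := by
  let w : ℕ → M → ℕ := fun n => (U n).indicator fun _ => n
  have hw : LocallyFinite fun n => support (w n) := hU.subset fun _ => support_indicator_subset
  refine ⟨fun y => ∑ᶠ n, w n y,
    continuous_finsum (fun n => (hclopen n).continuous_indicator continuous_const) hw, ?_⟩
  refine infinite_of_forall_exists_gt fun n => ?_
  obtain ⟨y, hy⟩ := hne (n + 1)
  refine ⟨_, mem_range_self y, ?_⟩
  calc n < n + 1 := n.lt_succ_self
    _ = w (n + 1) y := (indicator_of_mem hy fun _ => n + 1).symm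
    _ ≤ ∑ᶠ m, w m y := single_le_finsum (n + 1) (hw.point_finite y) fun _ => Nat.zero_le _

theorem exists_continuous_surjective_nat [PseudoMetricSpace M] (hM : ¬ CompactSpace M)
    {B : Set (Set M)} (hB : IsTopologicalBasis B) (hclopen : ∀ s ∈ B, IsClopen s) :
    ∃ p : M → ℕ, Continuous p ∧ Surjective p := by
  classical
  obtain ⟨s, hs⟩ := exists_seq_locallyFinite_ball hM
  have hU : ∀ n : ℕ, ∃ U ∈ B, s n ∈ U ∧ U ⊆ Metric.ball (s n) (1 / (n + 1)) := fun n =>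
    hB.exists_subset_of_mem_open (Metric.mem_ball_self Nat.one_div_pos_of_nat) Metric.isOpen_ball
  choose U hUB hsU hUs using hU
  obtain ⟨p, hp, hrange⟩ := exists_continuous_nat_infinite_range (hs.subset hUs)
    (fun n => hclopen _ (hUB n)) fun n => ⟨s n, hsU n⟩
  refine ⟨Nat.count (· ∈ range p) ∘ p, continuous_of_discreteTopology.comp hp, fun k => ?_⟩
  obtain ⟨y, hy⟩ : Nat.nth (· ∈ range p) k ∈ range p := Nat.nth_mem_of_infinite hrange k
  exact ⟨y, (congrArg _ hy).trans (Nat.count_nth_of_infinite (p := (· ∈ range p)) hrange k)⟩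

end NoncompactZeroDimensional

theorem baireSpace_of_isOpenQuotientMap {Y Z : Type*} [TopologicalSpace Y] [TopologicalSpace Z]
    [BaireSpace Y] {q : Y → Z} (hq : IsOpenQuotientMap q) : BaireSpace Z where
  baire_property G hGo hGd := by
    rw [← hq.dense_preimage_iff, preimage_iInter]
    exact dense_iInter_of_isOpen_nat (fun n => (hGo n).preimage hq.continuous)
      fun n => hq.dense_preimage_iff.2 (hGd n)

section Interpolation

variable {X : Type*} [TopologicalSpace X] {Z : Type*}

theorem isLocallyConstant_piecewise {A : Set X} [∀ x, Decidable (x ∈ A)] (hA : IsClopen A)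
    {f g : X → Z} (hf : IsLocallyConstant f) (hg : IsLocallyConstant g) :
    IsLocallyConstant (A.piecewise f g) := fun s => by
  rw [piecewise_preimage]
  exact ((hf s).inter hA.isOpen).union ((hg s).sdiff hA.isClosed)

variable [TotallySeparatedSpace X]

theorem exists_isClopen_mem_disjoint_finset {a : X} {T : Finset X} (ha : a ∉ T) :
    ∃ W : Set X, IsClopen W ∧ a ∈ W ∧ ∀ x ∈ T, x ∉ W := by
  have hsep : ∀ x ∈ T, ∃ U : Set X, IsClopen U ∧ a ∈ U ∧ x ∈ Uᶜ := fun x hx =>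
    exists_isClopen_of_totally_separated (ne_of_mem_of_not_mem hx ha).symm
  choose! U hU haU hxU using hsep
  exact ⟨⋂ x ∈ T, U x, isClopen_biInter_finset hU, mem_iInter₂.2 haU,
    fun x hx hxW => hxU x hx (mem_iInter₂.1 hxW x hx)⟩

theorem exists_isLocallyConstant_eqOn_finset {h : X → Z} (hh : IsLocallyConstant h) (ψ : X → Z)
    (T : Finset X) {O : X → Set X} (hO : ∀ x ∈ T, IsClopen (O x)) (hxO : ∀ x ∈ T, x ∈ O x) :
    ∃ h' : X → Z, IsLocallyConstant h' ∧ EqOn h' ψ T ∧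
      ∀ y, h' y = h y ∨ ∃ x ∈ T, y ∈ O x ∧ h' y = ψ x := by
  classical
  induction T using Finset.induction_on with
  | empty => exact ⟨h, hh, by simp, fun y => Or.inl rfl⟩
  | insert a T haT ih =>
    simp only [Finset.forall_mem_insert] at hO hxO
    obtain ⟨h', hlc, heq, hrange⟩ := ih hO.2 hxO.2
    obtain ⟨W, hW, haW, hTW⟩ := exists_isClopen_mem_disjoint_finset haT
    refine ⟨(O a ∩ W).piecewise (fun _ => ψ a) h',
      isLocallyConstant_piecewise (hO.1.inter hW) (.const _) hlc, ?_, fun y => ?_⟩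
    · refine (Finset.forall_mem_insert _ _ _).2
        ⟨piecewise_eq_of_mem _ _ _ ⟨hxO.1, haW⟩, fun x hx => ?_⟩
      rw [piecewise_eq_of_notMem _ _ _ fun hxW => hTW x hx hxW.2, heq hx]
    · by_cases hy : y ∈ O a ∩ W
      · exact Or.inr ⟨a, T.mem_insert_self a, hy.1, piecewise_eq_of_mem _ _ _ hy⟩
      · rw [piecewise_eq_of_notMem _ _ _ hy]
        exact (hrange y).imp_right fun ⟨x, hx, hyx⟩ => ⟨x, Finset.mem_insert_of_mem hx, hyx⟩

theorem exists_isLocallyConstant_modification {K : Type*} [PseudoMetricSpace K] {h ψ : X → K}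
    (hh : IsLocallyConstant h) {S S' : Finset X} {A : Set X} (hA : IsClopen A)
    (hSA : ∀ x ∈ S', x ∉ S → x ∈ A) {ε : ℝ} (hε : 0 ≤ ε)
    (hψ : ∀ x ∈ S, dist (h x) (ψ x) ≤ ε) :
    ∃ h' : X → K, IsLocallyConstant h' ∧ EqOn h' ψ S' ∧ (∀ y, h' y = h y ∨ ∃ x ∈ S', h' y = ψ x) ∧
      ∀ y ∉ A, dist (h y) (h' y) ≤ ε := by
  classical
  obtain ⟨h', hlc, heq, hrange⟩ := exists_isLocallyConstant_eqOn_finset hh ψ S'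
    (O := fun x => h ⁻¹' {h x} ∩ if x ∈ S then univ else A)
    (fun x _ => (hh.isClopen_fiber (h x)).inter (by split_ifs; exacts [isClopen_univ, hA]))
    (fun x hx => ⟨rfl, by split_ifs with hxS; exacts [mem_univ x, hSA x hx hxS]⟩)
  refine ⟨h', hlc, heq, fun y => (hrange y).imp_right fun ⟨x, hx, _, hy⟩ => ⟨x, hx, hy⟩,
    fun y hyA => ?_⟩
  obtain hy | ⟨x, -, ⟨hyx, hyO⟩, hy⟩ := hrange y
  · rwa [hy, dist_self]
  · have hxS : x ∈ S := by
      by_contra hxS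
      exact hyA (by simpa only [hxS, if_false] using hyO)
    rw [hy, show h y = h x from hyx]
    exact hψ x hxS

end Interpolation

namespace Cp

variable {X : Type*} [TopologicalSpace X]

section Topology

variable {Y Z : Type*} [TopologicalSpace Y] [TopologicalSpace Z]

theorem exists_finset_forall_eqOn_mem {G : Set (Cp X Y)} (hG : IsOpen G) {g : Cp X Y}
    (hg : g ∈ G) : ∃ T : Finset X, ∀ g' : Cp X Y, EqOn g'.1 g.1 T → g' ∈ G := by
  obtain ⟨O, hO, rfl⟩ := isOpen_induced_iff.1 hG
  obtain ⟨T, u, hu, hTu⟩ := isOpen_pi_iff.1 hO g.1 hg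
  exact ⟨T, fun g' hg' => hTu fun x hx => hg' hx ▸ (hu x hx).2⟩

theorem continuous_eval (x : X) : Continuous fun g : Cp X Y => g.1 x :=
  (continuous_apply x).comp continuous_subtype_val

theorem isOpen_setOf_eqOn [DiscreteTopology Z] {T : Set X} (hT : T.Finite) (φ : X → Z) :
    IsOpen {g : Cp X Z | EqOn g.1 φ T} := by
  have hinter : {g : Cp X Z | EqOn g.1 φ T} = ⋂ x ∈ T, {g | g.1 x = φ x} := by
    ext g
    simp [EqOn]
  rw [hinter]
  exact hT.isOpen_biInter fun x _ => (isOpen_discrete {φ x}).preimage (continuous_eval x)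

/-- Composition with a continuous map, as a map between spaces of continuous functions. -/
def postcomp (p : Y → Z) (hp : Continuous p) (f : Cp X Y) : Cp X Z :=
  ⟨p ∘ f.1, hp.comp f.2⟩

theorem continuous_postcomp {p : Y → Z} (hp : Continuous p) :
    Continuous (postcomp p hp : Cp X Y → Cp X Z) :=
  (continuous_pi fun x => hp.comp (continuous_eval x)).subtype_mk _

variable [DiscreteTopology Z] {p : Y → Z} (hp : Continuous p) (hsurj : Surjective p)
include hp hsurj

theorem surjective_postcomp : Surjective (postcomp p hp : Cp X Y → Cp X Z) := fun g =>
  ⟨⟨surjInv hsurj ∘ g.1, continuous_of_discreteTopology.comp g.2⟩,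
    Subtype.ext <| funext fun x => surjInv_eq hsurj (g.1 x)⟩

variable [TotallySeparatedSpace X]

theorem isOpenMap_postcomp : IsOpenMap (postcomp p hp : Cp X Y → Cp X Z) := by
  intro G hG
  refine isOpen_iff_forall_mem_open.2 ?_
  rintro _ ⟨f, hf, rfl⟩
  obtain ⟨T, hT⟩ := exists_finset_forall_eqOn_mem hG hf
  refine ⟨_, fun g hg => ?_, isOpen_setOf_eqOn T.finite_toSet (p ∘ f.1), fun _ _ => rfl⟩
  have hg_lc : IsLocallyConstant g.1 := (IsLocallyConstant.iff_continuous _).2 g.2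
  -- A section of `p` lifts `g`; correcting on `T` within the fibres of `g` keeps it a lift.
  obtain ⟨f', hf'_lc, hf'_eq, hf'⟩ := exists_isLocallyConstant_eqOn_finset
    (hg_lc.comp (surjInv hsurj)) f.1 T (O := fun x => g.1 ⁻¹' {g.1 x})
    (fun x _ => hg_lc.isClopen_fiber (g.1 x)) fun x _ => rfl
  refine ⟨⟨f', hf'_lc.continuous⟩, hT _ hf'_eq, Subtype.ext <| funext fun y => ?_⟩
  change p (f' y) = g.1 y
  obtain hy | ⟨x, hx, hyx, hy⟩ := hf' y
  · rw [hy, comp_apply, surjInv_eq hsurj]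
  · rw [hy, show g.1 y = g.1 x from hyx, hg hx, comp_apply]

theorem baireSpace_of_surjective_discrete [BaireSpace (Cp X Y)] : BaireSpace (Cp X Z) :=
  baireSpace_of_isOpenQuotientMap
    ⟨surjective_postcomp hp hsurj, continuous_postcomp hp, isOpenMap_postcomp hp hsurj⟩

end Topology

theorem exists_continuous_frequently_eqOn_const [TotallySeparatedSpace X] {Z : Type*}
    [TopologicalSpace Z] [DiscreteTopology Z] [BaireSpace (Cp X Z)] {Δ : ℕ → Set X}
    (hfin : ∀ n, (Δ n).Finite) (hΔ : ∀ x, ∀ᶠ n in atTop, x ∉ Δ n) (c : ℕ → Z) :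
    ∃ f : X → Z, Continuous f ∧ ∃ᶠ n in atTop, ∀ x ∈ Δ n, f x = c n := by
  classical
  let G : ℕ → Set (Cp X Z) := fun m => ⋃ n ≥ m, {g | EqOn g.1 (fun _ => c n) (Δ n)}
  have hGo : ∀ m, IsOpen (G m) := fun m => isOpen_biUnion fun n _ => isOpen_setOf_eqOn (hfin n) _
  have hGd : ∀ m, Dense (G m) := fun m => dense_iff_inter_open.2 fun W hW ⟨g, hg⟩ => by
    obtain ⟨T, hT⟩ := exists_finset_forall_eqOn_mem hW hg
    obtain ⟨n, hTn, hmn⟩ :=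
      ((T.eventually_all.2 fun x _ => hΔ x).and (eventually_ge_atTop m)).exists
    obtain ⟨g', hlc, heq, -⟩ := exists_isLocallyConstant_eqOn_finset
      ((IsLocallyConstant.iff_continuous _).2 g.2) (fun x => if x ∈ Δ n then c n else g.1 x)
      (T ∪ (hfin n).toFinset) (fun _ _ => isClopen_univ) fun x _ => mem_univ x
    refine ⟨⟨g', hlc.continuous⟩, hT _ fun x hx => ?_, mem_iUnion₂.2 ⟨n, hmn, fun x hx => ?_⟩⟩
    · exact (heq (Finset.mem_union_left _ hx)).trans (if_neg (hTn x hx))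
    · exact (heq (Finset.mem_union_right _ ((hfin n).mem_toFinset.2 hx))).trans (if_pos hx)
  have : Nonempty (Cp X Z) := ⟨⟨fun _ => c 0, continuous_const⟩⟩
  obtain ⟨f, hf⟩ := (dense_iInter_of_isOpen_nat hGo hGd).nonempty
  refine ⟨f.1, f.2, frequently_atTop.2 fun m => ?_⟩
  obtain ⟨n, hmn, hn⟩ := mem_iUnion₂.1 (mem_iInter.1 hf m)
  exact ⟨n, hmn, hn⟩

variable {K : Type*} [PseudoMetricSpace K]

/-- The basic open set of all `g` that are uniformly `r`-close to `φ` on the finite set `S`.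
The centre `φ` is an arbitrary function, since only its values on `S` matter. -/
def cylinder (S : Finset X) (φ : X → K) (r : ℝ) : Set (Cp X K) :=
  {g | ∀ x ∈ S, dist (g.1 x) (φ x) < r}

theorem isOpen_cylinder (S : Finset X) (φ : X → K) (r : ℝ) : IsOpen (cylinder S φ r) := by
  have hinter : cylinder S φ r = ⋂ x ∈ S, {g | dist (g.1 x) (φ x) < r} := by
    ext g
    simp [cylinder]
  rw [hinter]
  exact isOpen_biInter_finset fun x _ =>
    isOpen_lt ((continuous_eval x).dist continuous_const) continuous_const

theorem exists_cylinder_subset {G : Set (Cp X K)} (hG : IsOpen G) {g : Cp X K} (hg : g ∈ G) :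
    ∃ (T : Finset X) (r : ℝ), 0 < r ∧ cylinder T g.1 r ⊆ G := by
  obtain ⟨O, hO, rfl⟩ := isOpen_induced_iff.1 hG
  obtain ⟨T, u, hu, hTu⟩ := isOpen_pi_iff.1 hO g.1 hg
  have hball : ∀ x ∈ T, ∀ᶠ r in 𝓝[>] (0 : ℝ), Metric.ball (g.1 x) r ⊆ u x := fun x hx => by
    obtain ⟨ε, hε, hεu⟩ := Metric.isOpen_iff.1 (hu x hx).1 _ (hu x hx).2
    filter_upwards [Ioo_mem_nhdsGT hε] with r hr
    exact (Metric.ball_subset_ball hr.2.le).trans hεu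
  obtain ⟨r, hr, hr0⟩ := ((T.eventually_all.2 hball).and self_mem_nhdsWithin).exists
  exact ⟨T, r, hr0, fun g' hg' => hTu fun x hx => hr x hx (hg' x hx)⟩

theorem cylinder_anti {S T : Finset X} (hST : S ⊆ T) {r s : ℝ} (hrs : r ≤ s) (φ : X → K) :
    cylinder T φ r ⊆ cylinder S φ s :=
  fun _ hg x hx => (hg x (hST hx)).trans_le hrs

variable [TotallySeparatedSpace X]

theorem exists_mem_cylinder_of_dense [Nonempty K] {G : Set (Cp X K)} (hG : Dense G)
    (S : Finset X) (φ : X → K) {ε : ℝ} (hε : 0 < ε) : ∃ g ∈ G, g ∈ cylinder S φ ε := by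
  obtain ⟨h, hlc, heq, -⟩ := exists_isLocallyConstant_eqOn_finset
    (.const (Classical.arbitrary K)) φ S (fun _ _ => isClopen_univ) fun x _ => mem_univ x
  have hmem : (⟨h, hlc.continuous⟩ : Cp X K) ∈ cylinder S φ ε := fun x hx => by
    simpa only [heq hx, dist_self] using hε
  obtain ⟨g, hgS, hgG⟩ := hG.inter_open_nonempty _ (isOpen_cylinder S φ ε) ⟨_, hmem⟩
  exact ⟨g, hgG, hgS⟩

-- Only finitely many patterns `S → P` occur, so finitely many witnesses of density suffice.
theorem exists_uniform_refinement [Nonempty K] {G : Set (Cp X K)} (hGo : IsOpen G)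
    (hGd : Dense G) (S : Finset X) (P : Finset K) {ε : ℝ} (hε : 0 < ε) :
    ∃ (S' : Finset X) (P' : Finset K) (ε' : ℝ), S ⊆ S' ∧ P ⊆ P' ∧ 0 < ε' ∧ ε' ≤ ε / 2 ∧
      ∀ φ : X → K, (∀ x ∈ S, φ x ∈ P) → ∃ ψ : X → K, (∀ x ∈ S', ψ x ∈ P') ∧
        (∀ x ∈ S, dist (φ x) (ψ x) ≤ ε) ∧ cylinder S' ψ (3 * ε') ⊆ G := by
  classical
  have hwitness : ∀ θ : S → P, ∃ (g : Cp X K) (T : Finset X) (r : ℝ), 0 < r ∧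
      (∀ x : S, dist (θ x : K) (g.1 x) ≤ ε) ∧ cylinder T g.1 r ⊆ G := fun θ => by
    obtain ⟨φ, hφ⟩ := Subtype.coe_injective.surjective_comp_right (fun x : S => (θ x : K))
    obtain ⟨g, hgG, hg⟩ := exists_mem_cylinder_of_dense hGd S φ hε
    obtain ⟨T, r, hr, hT⟩ := exists_cylinder_subset hGo hgG
    refine ⟨g, T, r, hr, fun x => ?_, hT⟩
    rw [← congrFun hφ x, dist_comm]
    exact (hg x x.2).le
  choose g T r hr hg hT using hwitness
  have hradius : ∀ᶠ ε' in 𝓝[>] (0 : ℝ), ∀ θ, 3 * ε' ≤ r θ := eventually_all.2 fun θ => by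
    filter_upwards [Ioo_mem_nhdsGT (div_pos (hr θ) three_pos)] with ε' hε'
    linarith [hε'.2]
  obtain ⟨ε', hε'r, hε'0, hε'ε⟩ := (hradius.and (Ioo_mem_nhdsGT (half_pos hε))).exists
  let S' : Finset X := S ∪ Finset.univ.biUnion T
  let P' : Finset K := P ∪ Finset.univ.biUnion fun θ => S'.image (g θ).1
  refine ⟨S', P', ε', Finset.subset_union_left, Finset.subset_union_left, hε'0, hε'ε.le,
    fun φ hφ => ?_⟩
  let θ : S → P := fun x => ⟨φ x, hφ x x.2⟩
  have hTS' : T θ ⊆ S' :=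
    (Finset.subset_biUnion_of_mem T (Finset.mem_univ θ)).trans Finset.subset_union_right
  refine ⟨(g θ).1, fun x hx => ?_, fun x hx => hg θ ⟨x, hx⟩,
    (cylinder_anti hTS' (hε'r θ) _).trans (hT θ)⟩
  exact Finset.mem_union_right _
    (Finset.mem_biUnion.2 ⟨θ, Finset.mem_univ θ, Finset.mem_image_of_mem _ hx⟩)

/-- Increasing finite sets of points and of values together with halving radii such that every
pattern of stage-`n` values on the stage-`n` points can be perturbed, by at most the stage-`n`
radius, to a pattern of stage-`(n + 1)` values whose cylinder lies in `G n`. A scheme depends on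
`G` alone, so it can be fixed before any continuous function is chosen. The factor `3` leaves
room for a limit that moves by at most twice the radius. -/
structure RefiningScheme (G : ℕ → Set (Cp X K)) where
  points : ℕ → Finset X
  values : ℕ → Finset K
  radius : ℕ → ℝ
  points_mono : Monotone points
  values_mono : Monotone values
  radius_pos : ∀ n, 0 < radius n
  radius_succ_le : ∀ n, radius (n + 1) ≤ radius n / 2
  exists_refinement : ∀ n (φ : X → K), (∀ x ∈ points n, φ x ∈ values n) →
    ∃ ψ : X → K, (∀ x ∈ points (n + 1), ψ x ∈ values (n + 1)) ∧
      (∀ x ∈ points n, dist (φ x) (ψ x) ≤ radius n) ∧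
      cylinder (points (n + 1)) ψ (3 * radius (n + 1)) ⊆ G n

theorem exists_refiningScheme [Nonempty K] {G : ℕ → Set (Cp X K)} (hGo : ∀ n, IsOpen (G n))
    (hGd : ∀ n, Dense (G n)) (S : Finset X) (P : Finset K) {ε : ℝ} (hε : 0 < ε) :
    ∃ σ : RefiningScheme G, σ.points 0 = S ∧ σ.values 0 = P ∧ σ.radius 0 = ε := by
  obtain ⟨s, hs0, hpos, hs⟩ := exists_seq_of_forall_exists_succ
    (α := Finset X × Finset K × ℝ) (a := (S, P, ε)) (I := fun _ s => 0 < s.2.2)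
    (R := fun n s s' => s.1 ⊆ s'.1 ∧ s.2.1 ⊆ s'.2.1 ∧ s'.2.2 ≤ s.2.2 / 2 ∧
      ∀ φ : X → K, (∀ x ∈ s.1, φ x ∈ s.2.1) → ∃ ψ : X → K, (∀ x ∈ s'.1, ψ x ∈ s'.2.1) ∧
        (∀ x ∈ s.1, dist (φ x) (ψ x) ≤ s.2.2) ∧ cylinder s'.1 ψ (3 * s'.2.2) ⊆ G n)
    hε fun n ⟨S, P, ε⟩ hε => by
      obtain ⟨S', P', ε', hS, hP, hε', hhalf, href⟩ :=
        exists_uniform_refinement (hGo n) (hGd n) S P hε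
      exact ⟨(S', P', ε'), hε', hS, hP, hhalf, href⟩
  exact ⟨{
    points n := (s n).1
    values n := (s n).2.1
    radius n := (s n).2.2
    points_mono := monotone_nat_of_le_succ fun n => (hs n).1
    values_mono := monotone_nat_of_le_succ fun n => (hs n).2.1
    radius_pos := hpos
    radius_succ_le n := (hs n).2.2.1
    exists_refinement n := (hs n).2.2.2 }, by simp only [hs0, and_self]⟩

namespace RefiningScheme

variable {G : ℕ → Set (Cp X K)} (σ : RefiningScheme G) {f : X → ℕ}

theorem exists_next_approximation (hf : Continuous f) (n : ℕ) {h : X → K}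
    (hlc : IsLocallyConstant h) (hval : ∀ y, h y ∈ σ.values n) :
    ∃ h' : X → K, (IsLocallyConstant h' ∧ ∀ y, h' y ∈ σ.values (n + 1)) ∧
      (∀ y, f y ≠ n ∨ y ∈ σ.points n → dist (h y) (h' y) ≤ σ.radius n) ∧
      ((∀ x ∈ (σ.points (n + 1) \ σ.points n : Set X), f x = n) →
        cylinder (σ.points (n + 1)) h' (3 * σ.radius (n + 1)) ⊆ G n) := by
  have hvalues := σ.values_mono n.le_succ
  by_cases hgood : ∀ x ∈ (σ.points (n + 1) \ σ.points n : Set X), f x = n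
  · obtain ⟨ψ, hψval, hψdist, hψG⟩ := σ.exists_refinement n h fun x _ => hval x
    obtain ⟨h', hlc', heq, hrange, hfar⟩ := exists_isLocallyConstant_modification hlc
      ((isClopen_discrete {n}).preimage hf)
      (fun x hx hxS => hgood x ⟨hx, hxS⟩) (σ.radius_pos n).le hψdist
    refine ⟨h', ⟨hlc', fun y => ?_⟩, fun y hy => ?_, fun _ g hg => hψG fun x hx => ?_⟩
    · obtain hy | ⟨x, hx, hy⟩ := hrange y
      · exact hy ▸ hvalues (hval y)
      · exact hy ▸ hψval x hx
    · obtain hy | hy := hy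
      · exact hfar y hy
      · exact (heq (σ.points_mono n.le_succ hy)).symm ▸ hψdist y hy
    · exact heq hx ▸ hg x hx
  · exact ⟨h, ⟨hlc, fun y => hvalues (hval y)⟩,
      fun y _ => (dist_self (h y)).trans_le (σ.radius_pos n).le, fun hn => absurd hn hgood⟩

theorem exists_approximations (hf : Continuous f) {h : X → K} (hlc : IsLocallyConstant h)
    (hval : ∀ y, h y ∈ σ.values 0) :
    ∃ u : ℕ → X → K, u 0 = h ∧ (∀ n, Continuous (u n)) ∧
      (∀ n y, f y ≠ n ∨ y ∈ σ.points n → dist (u n y) (u (n + 1) y) ≤ σ.radius n) ∧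
      ∀ n, (∀ x ∈ (σ.points (n + 1) \ σ.points n : Set X), f x = n) →
        cylinder (σ.points (n + 1)) (u (n + 1)) (3 * σ.radius (n + 1)) ⊆ G n := by
  obtain ⟨u, hu0, hu, hstep⟩ := exists_seq_of_forall_exists_succ
    (I := fun n h => IsLocallyConstant h ∧ ∀ y, h y ∈ σ.values n) ⟨hlc, hval⟩
    fun n _ hh => σ.exists_next_approximation hf n hh.1 hh.2
  exact ⟨u, hu0, fun n => (hu n).1.continuous, fun n => (hstep n).1, fun n => (hstep n).2⟩

theorem exists_close_frequently_mem [BaireSpace (Cp X ℕ)] [CompleteSpace K] {h : X → K}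
    (hlc : IsLocallyConstant h) (hval : ∀ y, h y ∈ σ.values 0) :
    ∃ l : Cp X K, (∀ x ∈ σ.points 0, dist (h x) (l.1 x) ≤ 2 * σ.radius 0) ∧
      ∃ᶠ n in atTop, l ∈ G n := by
  obtain ⟨f, hf, hgood⟩ := exists_continuous_frequently_eqOn_const
    (Δ := fun n => (σ.points (n + 1) \ σ.points n : Set X))
    (fun n => (σ.points (n + 1)).finite_toSet.sdiff)
    (eventually_notMem_succ_sdiff fun _ _ hmn => Finset.coe_subset.2 (σ.points_mono hmn)) id
  obtain ⟨u, rfl, huc, hu, huG⟩ := σ.exists_approximations hf hlc hval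
  have hloc : ∀ x, ∃ N, ∀ᶠ y in 𝓝 x, ∀ n ≥ N, dist (u n y) (u (n + 1) y) ≤ σ.radius n := by
    refine fun x => ⟨f x + 1, ?_⟩
    filter_upwards [((isOpen_discrete {f x}).preimage hf).mem_nhds rfl] with y hy n hn
    exact hu n y (.inl ((show f y = f x from hy).trans_lt hn).ne)
  obtain ⟨l, hl, hlim⟩ := exists_continuous_limit_of_locally_halving σ.radius_succ_le huc hloc
  have hclose : ∀ n, ∀ x ∈ σ.points n, dist (u n x) (l x) ≤ 2 * σ.radius n := fun n x hx =>
    dist_le_two_mul_of_tendsto_of_halving σ.radius_succ_le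
      (fun m hm => hu m x (.inr (σ.points_mono hm hx))) (hlim x)
  refine ⟨⟨l, hl⟩, hclose 0, hgood.mono fun n hn => huG n hn fun x hx => ?_⟩
  rw [dist_comm]
  linarith [hclose (n + 1) x hx, σ.radius_pos (n + 1)]

end RefiningScheme

theorem dense_iInter_of_antitone [BaireSpace (Cp X ℕ)] [CompleteSpace K] [Nonempty K]
    {G : ℕ → Set (Cp X K)} (hGo : ∀ n, IsOpen (G n)) (hGd : ∀ n, Dense (G n))
    (hG : Antitone G) : Dense (⋂ n, G n) := by
  classical
  refine dense_iff_inter_open.2 fun W hW ⟨w, hw⟩ => ?_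
  obtain ⟨S, r, hr, hSW⟩ := exists_cylinder_subset hW hw
  let k : K := Classical.arbitrary K
  obtain ⟨h, hlc, heq, hrange⟩ := exists_isLocallyConstant_eqOn_finset (.const k) w.1 S
    (fun _ _ => isClopen_univ) fun x _ => mem_univ x
  obtain ⟨σ, rfl, hP, hε⟩ :=
    exists_refiningScheme hGo hGd S (insert k (S.image w.1)) (div_pos hr three_pos)
  have hval : ∀ y, h y ∈ σ.values 0 := fun y => by
    rw [hP, Finset.mem_insert, Finset.mem_image]
    exact (hrange y).imp_right fun ⟨x, hx, _, hy⟩ => ⟨x, hx, hy.symm⟩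
  obtain ⟨l, hl, hfreq⟩ := σ.exists_close_frequently_mem hlc hval
  refine ⟨l, hSW fun x hx => ?_, mem_iInter.2 fun m => ?_⟩
  · rw [dist_comm, ← heq hx]
    linarith [hl x hx]
  · obtain ⟨n, hmn, hn⟩ := frequently_atTop.1 hfreq m
    exact hG hmn hn

theorem baireSpace_of_completeSpace [BaireSpace (Cp X ℕ)] [CompleteSpace K] :
    BaireSpace (Cp X K) := by
  cases isEmpty_or_nonempty K
  · exact baire_of_finite
  refine ⟨fun G hGo hGd => ?_⟩
  have hopen : ∀ n, IsOpen (dissipate G n) := fun n =>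
    (finite_Iic n).isOpen_biInter fun i _ => hGo i
  have hdense : ∀ n, Dense (dissipate G n) := fun n => by
    induction n with
    | zero => simpa only [dissipate_zero_nat] using hGd 0
    | succ n ih =>
      rw [dissipate_succ]
      exact ih.inter_of_isOpen_left (hGd (n + 1)) (hopen n)
  rw [← iInter_dissipate]
  exact dense_iInter_of_antitone hopen hdense antitone_dissipate

theorem baireSpace_nat_of_noncompact [BaireSpace (Cp X K)] (hK : ¬ CompactSpace K)
    {B : Set (Set K)} (hB : IsTopologicalBasis B) (hclopen : ∀ s ∈ B, IsClopen s) :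
    BaireSpace (Cp X ℕ) := by
  obtain ⟨p, hp, hsurj⟩ := exists_continuous_surjective_nat hK hB hclopen
  exact baireSpace_of_surjective_discrete hp hsurj

end Cp

theorem statement10_general (X : Type u) [TopologicalSpace X] [TotallySeparatedSpace X] :
    List.TFAE
      [BaireSpace (Cp X ℕ),
       ∃ (M : Type v) (_ : MetricSpace M), CompleteSpace M ∧ ¬ CompactSpace M ∧
         (∃ B : Set (Set M), (∀ s ∈ B, IsClopen s) ∧ IsTopologicalBasis B) ∧
         BaireSpace (Cp X M),
       ∃ (M : Type v) (_ : PseudoMetricSpace M), ¬ CompactSpace M ∧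
         (∃ B : Set (Set M), (∀ s ∈ B, IsClopen s) ∧ IsTopologicalBasis B) ∧
         BaireSpace (Cp X M),
       ∀ (K : Type v) (_ : MetricSpace K), CompleteSpace K → BaireSpace (Cp X K)] := by
  tfae_have 1 → 4 := fun _ K _ _ => Cp.baireSpace_of_completeSpace
  tfae_have 4 → 2 := fun h =>
    ⟨ULift ℕ, inferInstance, inferInstance, fun _ =>
      not_finite_iff_infinite.2 inferInstance (finite_of_compact_of_discrete (X := ULift.{v} ℕ)),
      ⟨{s | IsOpen s}, fun s _ => isClopen_discrete s, isTopologicalBasis_opens⟩,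
      h (ULift ℕ) inferInstance inferInstance⟩
  tfae_have 2 → 3 := fun ⟨M, _, _, hM⟩ => ⟨M, inferInstance, hM⟩
  tfae_have 3 → 1 := fun ⟨M, _, hM, ⟨_, hclopen, hB⟩, _⟩ =>
    Cp.baireSpace_nat_of_noncompact hM hB hclopen
  tfae_finish

/-- For a totally disconnected (totally separated) Tychonoff space `X`, the following are
equivalent: (a) `C_p(X, ℕ)` is Baire (`ℕ` discrete); (b) `C_p(X, M)` is Baire for some
non-compact zero-dimensional complete metric space `M` (zero-dimensional: `M` has a base
of clopen sets); (c) `C_p(X, K)` is Baire for every complete metric space `K`. -/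
theorem statement10 (X : Type*) [TopologicalSpace X] [T1Space X] [CompletelyRegularSpace X]
    [TotallySeparatedSpace X] :
    List.TFAE
      [BaireSpace (Cp X ℕ),
       ∃ (M : Type) (_ : MetricSpace M), CompleteSpace M ∧ ¬ CompactSpace M ∧
         (∃ B : Set (Set M), (∀ s ∈ B, IsClopen s) ∧ TopologicalSpace.IsTopologicalBasis B) ∧
         BaireSpace (Cp X M),
       ∀ (K : Type) (_ : MetricSpace K), CompleteSpace K → BaireSpace (Cp X K)] := by
  have h := statement10_general.{_, 0} X
  tfae_have 1 ↔ 2 := h.out 0 1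
  tfae_have 1 ↔ 3 := h.out 0 3
  tfae_finish
end

section
/- Let X be an infinite pseudocompact Tychonoff space and let Y be a topological space such that C_p(X, Y) is dense in the product space Y^X. If C_p(X, Y) is a Baire space, then Y is pseudocompact. -/
/-!
If `ψ : Y → ℝ` is lower semicontinuous and unbounded above, each set `{f | ∀ i, ψ (f i) ≤ n}` is
a product of infinitely many proper closed sets, hence nowhere dense in `ι → Y` for infinite `ι`.
The functions `f` with `ψ ∘ f` bounded above are therefore meagre, and remain so in every dense
subspace. If `Y` is not pseudocompact, take `ψ = |φ|` with `φ` continuous and unbounded: since `X`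
is pseudocompact, *every* `f ∈ C_p(X, Y)` has `ψ ∘ f` bounded, so `C_p(X, Y)` is meagre in itself.
-/

open Set Topology

/-- A space is pseudocompact if every continuous real-valued function on it is bounded. -/
def IsPseudocompact (X : Type*) [TopologicalSpace X] : Prop :=
  ∀ f : X → ℝ, Continuous f → ∃ C : ℝ, ∀ x, |f x| ≤ C

section DenseSubspace

variable {Z W : Type*} [TopologicalSpace Z] [TopologicalSpace W] {e : Z → W} {s : Set W}

lemma isNowhereDense_preimage_of_isDenseInducing (he : IsDenseInducing e)
    (hs : IsNowhereDense s) : IsNowhereDense (e ⁻¹' s) := by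
  obtain ⟨hopen, hdense⟩ :=
    isClosed_isNowhereDense_iff_compl.mp ⟨isClosed_closure, hs.closure⟩
  have hdense_preimage : Dense (e ⁻¹' (closure s)ᶜ) := by
    rw [← he.dense_image, image_preimage_eq_inter_range]
    exact hdense.inter_of_isOpen_left he.dense hopen
  have hclosed : IsNowhereDense (e ⁻¹' closure s) :=
    (isClosed_isNowhereDense_iff_compl.mpr
      ⟨hopen.preimage he.continuous, hdense_preimage⟩).2
  exact hclosed.mono (preimage_mono subset_closure)

lemma isMeagre_preimage_of_isDenseInducing (he : IsDenseInducing e) (hs : IsMeagre s) :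
    IsMeagre (e ⁻¹' s) := by
  obtain ⟨S, hS, hScount, hsS⟩ := isMeagre_iff_countable_union_isNowhereDense.mp hs
  refine (isMeagre_biUnion hScount fun t ht =>
    (isNowhereDense_preimage_of_isDenseInducing he (hS t ht)).isMeagre).mono ?_
  rw [← preimage_sUnion]
  exact preimage_mono hsS

end DenseSubspace

section Product

variable {ι : Type*} {Y : ι → Type*} [∀ i, TopologicalSpace (Y i)] {K : ∀ i, Set (Y i)}

lemma interior_univ_pi_eq_empty (hK : {i | K i ≠ univ}.Infinite) :
    interior (univ.pi K) = ∅ := by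
  classical
  refine eq_empty_of_forall_notMem fun f hf => ?_
  rw [mem_interior_iff_mem_nhds, nhds_pi, Filter.mem_pi] at hf
  obtain ⟨I, hI, u, hu, hsub⟩ := hf
  obtain ⟨i, hKi, hiI⟩ := hK.exists_notMem_finite hI
  obtain ⟨y, hy⟩ := (ne_univ_iff_exists_notMem (K i)).mp hKi
  have hupdate : Function.update f i y ∈ I.pi u := fun j hj => by
    rw [Function.update_of_ne (ne_of_mem_of_not_mem hj hiI)]
    exact mem_of_mem_nhds (hu j)
  exact hy (by simpa using hsub hupdate i (mem_univ i))

lemma isNowhereDense_univ_pi (hK : {i | ¬ Dense (K i)}.Infinite) :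
    IsNowhereDense (univ.pi K) := by
  rw [IsNowhereDense, closure_pi_set]
  exact interior_univ_pi_eq_empty (by simpa only [dense_iff_closure_eq] using hK)

end Product

lemma isMeagre_setOf_bddAbove_range_comp {ι Y : Type*} [Infinite ι] [TopologicalSpace Y]
    {ψ : Y → ℝ} (hψ : LowerSemicontinuous ψ) (hunbdd : ¬ BddAbove (range ψ)) :
    IsMeagre {f : ι → Y | BddAbove (range (ψ ∘ f))} := by
  have hsublevel (n : ℕ) : ¬ Dense (ψ ⁻¹' Iic (n : ℝ)) := fun hdense => by
    have hle : ψ ⁻¹' Iic (n : ℝ) = univ :=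
      (hψ.isClosed_preimage n).closure_eq.symm.trans hdense.closure_eq
    exact hunbdd ⟨n, forall_mem_range.mpr (eq_univ_iff_forall.mp hle)⟩
  have hpi (n : ℕ) : IsMeagre (univ.pi fun _ : ι => ψ ⁻¹' Iic (n : ℝ)) :=
    (isNowhereDense_univ_pi (by simpa [hsublevel] using infinite_univ)).isMeagre
  refine (isMeagre_iUnion hpi).mono fun f ⟨C, hC⟩ => ?_
  obtain ⟨n, hn⟩ := exists_nat_ge C
  exact mem_iUnion.mpr ⟨n, fun i _ => (hC (mem_range_self i)).trans hn⟩

lemma isPseudocompact_iff_bddAbove_range_abs {X : Type*} [TopologicalSpace X] :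
    IsPseudocompact X ↔ ∀ φ : X → ℝ, Continuous φ → BddAbove (range fun x => |φ x|) := by
  simp only [IsPseudocompact, bddAbove_def, forall_mem_range]

theorem statement12_general {X Y : Type*} [TopologicalSpace X] [Infinite X]
    (hX : IsPseudocompact X) [TopologicalSpace Y]
    (hdense : Dense (range (Subtype.val : Cp X Y → X → Y)))
    (hnonmeagre : ¬ IsMeagre (univ : Set (Cp X Y))) :
    IsPseudocompact Y := by
  rw [isPseudocompact_iff_bddAbove_range_abs] at hX ⊢
  intro φ hφ
  by_contra hunbdd
  have hmeagre : IsMeagre {f : X → Y | BddAbove (range ((fun y => |φ y|) ∘ f))} :=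
    isMeagre_setOf_bddAbove_range_comp hφ.abs.lowerSemicontinuous hunbdd
  have hval : IsDenseInducing (Subtype.val : Cp X Y → X → Y) := ⟨.subtypeVal, hdense⟩
  exact hnonmeagre <| (isMeagre_preimage_of_isDenseInducing hval hmeagre).mono
    fun f _ => hX (φ ∘ f.1) (hφ.comp f.2)

/-- Let `X` be an infinite pseudocompact Tychonoff space and `Y` a space such that
`C_p(X, Y)` is dense in `Y^X`. If `C_p(X, Y)` is Baire, then `Y` is pseudocompact. -/
theorem statement12 (X Y : Type*) [TopologicalSpace X] [T1Space X] [CompletelyRegularSpace X]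
    [Infinite X] (hX : IsPseudocompact X) [TopologicalSpace Y]
    (hdense : Dense (Set.range (Subtype.val : Cp X Y → X → Y)))
    (hBaire : BaireSpace (Cp X Y)) :
    IsPseudocompact Y := by
  rcases isEmpty_or_nonempty (Cp X Y) with hempty | _
  · exact fun _ _ => ⟨0, fun y => (hempty.false ⟨fun _ => y, continuous_const⟩).elim⟩
  · exact statement12_general hX hdense (not_isMeagre_of_isOpen isOpen_univ univ_nonempty)
end

section
/- There exists a totally disconnected Tychonoff space T such that for every nonempty separable metric space M, the space C_p(T, M) is a Baire space if, and only if, M is a Peano continuum. -/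
open Set Topology

open TopologicalSpace Function

/-!
Fix `x₀` in a product `∏ X i` whose factors are Peano continua and auxiliary compact spaces, among
them all two-point ones, and let `T` map to the product so that its image meets every face obtained
by fixing countably many coordinates. Products of separable spaces satisfy the countable chain
condition, so every continuous `f : T → M` depends on countably many coordinates and extends
continuously to the whole product.

If `C_p(T, M)` is Baire, then for any sequence `z` of distinct points of `T` a generic `f` makes
every point of `M` a cluster point of `f ∘ z`. Choose `z` so that in every auxiliary coordinate it
is eventually equal to `x₀`. All cluster points of `z` in the product then lie in the face where
the auxiliary coordinates are those of `x₀`, and the extension of `f` maps this face, a product of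
Peano continua, onto `M`.

Conversely, let `M` be a Peano continuum. Each assignment of values in `M` to a countable subset
of `T` is prescribed by some coordinate, hence extends to a continuous map, so `C_p(T, M)` meets
every nonempty Gδ subset of the compact space `M ^ T` and is therefore Baire. The two-point
coordinates separate the points of `T`. All prescriptions can be met at once because each involves
only countably many points of `T`, while every point of the `Σ`-product based at `x₀` is taken
uncountably often.
-/

universe u

section Product

variable {ι : Type*} {X : ι → Type*} [∀ i, TopologicalSpace (X i)]

theorem exists_finset_forall_mem_of_isOpen_pi {U : Set (∀ i, X i)} (hU : IsOpen U)
    {x : ∀ i, X i} (hx : x ∈ U) :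
    ∃ I : Finset ι, ∀ y : ∀ i, X i, (∀ i ∈ I, y i = x i) → y ∈ U := by
  obtain ⟨I, u, hu, hIU⟩ := isOpen_pi_iff.1 hU x hx
  exact ⟨I, fun y hy ↦ hIU fun i hi ↦ hy i hi ▸ (hu i hi).2⟩

theorem exists_countable_forall_mem_of_isGδ_pi {G : Set (∀ i, X i)} (hG : IsGδ G)
    {x : ∀ i, X i} (hx : x ∈ G) :
    ∃ C : Set ι, C.Countable ∧ ∀ y : ∀ i, X i, (∀ i ∈ C, y i = x i) → y ∈ G := by
  obtain ⟨U, hUo, rfl⟩ := hG.eq_iInter_nat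
  choose I hI using fun n ↦ exists_finset_forall_mem_of_isOpen_pi (hUo n) (mem_iInter.1 hx n)
  refine ⟨⋃ n, I n, countable_iUnion fun n ↦ (I n).countable_toSet, fun y hy ↦ ?_⟩
  exact mem_iInter.2 fun n ↦ hI n y fun i hi ↦ hy i (mem_iUnion.2 ⟨n, hi⟩)

theorem isTopologicalBasis_isOpen_dependsOn_finset :
    IsTopologicalBasis {U : Set (∀ i, X i) |
      IsOpen U ∧ ∃ I : Finset ι, DependsOn (· ∈ U) (I : Set ι)} := by
  refine isTopologicalBasis_of_isOpen_of_nhds (fun U hU ↦ hU.1) fun x U hx hU ↦ ?_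
  obtain ⟨I, u, hu, hIU⟩ := isOpen_pi_iff.1 hU x hx
  refine ⟨(I : Set ι).pi u, ⟨isOpen_set_pi I.finite_toSet fun i hi ↦ (hu i hi).1, I, ?_⟩,
    fun i hi ↦ (hu i hi).2, hIU⟩
  intro y z hyz
  exact propext (forall₂_congr fun i hi ↦ by rw [hyz i hi])

open MeasureTheory ProbabilityTheory in
theorem countable_of_isOpen_of_pairwiseDisjoint_pi_nat {κ : Type*} {U : κ → Set (ι → ℕ)}
    (hd : Pairwise (Disjoint on U)) (ho : ∀ k, IsOpen (U k)) (hne : ∀ k, (U k).Nonempty) :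
    Countable κ := by
  choose x hx using hne
  choose I u hu hIU using fun k ↦ isOpen_pi_iff.1 (ho k) (x k) (hx k)
  -- A Poisson law charges every point of `ℕ`, so `μ` charges every cylinder.
  let μ : Measure (ι → ℕ) := Measure.infinitePi fun _ ↦ poissonMeasure 1
  have hpos (k : κ) : 0 < μ ((I k : Set ι).pi (u k)) := by
    rw [Measure.infinitePi_pi _ fun _ _ ↦ .of_discrete, CanonicallyOrderedAdd.prod_pos]
    intro i hi
    have hsingle : 0 < poissonMeasure 1 {x k i} := by
      rw [poissonMeasure_singleton]
      exact ENNReal.ofReal_pos.2 (by positivity)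
    exact hsingle.trans_le (measure_mono (singleton_subset_iff.2 (hu k i hi).2))
  have hcount : {k | 0 < μ ((I k : Set ι).pi (u k))}.Countable :=
    Measure.countable_meas_pos_of_disjoint_iUnion
      (fun k ↦ .pi (I k).countable_toSet fun _ _ ↦ .of_discrete)
      fun k l hkl ↦ (hd hkl).mono (hIU k) (hIU l)
  exact countable_univ_iff.1 (hcount.mono fun k _ ↦ hpos k)

theorem countable_of_isOpen_of_pairwiseDisjoint_pi [∀ i, SeparableSpace (X i)]
    {S : Set (Set (∀ i, X i))} (hd : S.PairwiseDisjoint id) (ho : ∀ U ∈ S, IsOpen U)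
    (hne : ∀ U ∈ S, U.Nonempty) : S.Countable := by
  rcases S.eq_empty_or_nonempty with rfl | ⟨U, hU⟩
  · exact countable_empty
  obtain ⟨x, -⟩ := hne U hU
  have (i : ι) : Nonempty (X i) := ⟨x i⟩
  let p : (ι → ℕ) → ∀ i, X i := Pi.map fun i ↦ denseSeq (X i)
  have hp : DenseRange p := .piMap fun i ↦ denseRange_denseSeq (X i)
  have hpc : Continuous p := continuous_pi fun i ↦ continuous_of_discreteTopology.comp
    (continuous_apply i)
  refine countable_of_isOpen_of_pairwiseDisjoint_pi_nat (U := fun U : S ↦ p ⁻¹' U.1)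
    (fun U V hUV ↦ ?_) (fun U ↦ (ho U U.2).preimage hpc)
    fun U ↦ hp.exists_mem_open (ho U U.2) (hne U U.2)
  exact (hd U.2 V.2 (Subtype.coe_ne_coe.2 hUV)).preimage p

theorem exists_pairwiseDisjoint_subset_basis_dense {Y : Type*} [TopologicalSpace Y]
    {B : Set (Set Y)} (hB : IsTopologicalBasis B) {O : Set Y} (hO : IsOpen O) :
    ∃ S ⊆ B, S.PairwiseDisjoint id ∧ (∀ U ∈ S, U.Nonempty ∧ U ⊆ O) ∧ O ⊆ closure (⋃₀ S) := by
  let 𝓕 : Set (Set (Set Y)) :=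
    {S | S ⊆ B ∧ S.PairwiseDisjoint id ∧ ∀ U ∈ S, U.Nonempty ∧ U ⊆ O}
  obtain ⟨S, ⟨hSB, hSd, hSO⟩, hmax⟩ : ∃ S, Maximal (· ∈ 𝓕) S := by
    refine zorn_subset 𝓕 fun c hc hchain ↦ ⟨⋃₀ c, ⟨sUnion_subset fun S hS ↦ (hc hS).1, ?_, ?_⟩,
      fun S hS ↦ subset_sUnion_of_mem hS⟩
    · exact (pairwiseDisjoint_sUnion hchain.directedOn).2 fun S hS ↦ (hc hS).2.1
    · rintro U ⟨S, hS, hU⟩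
      exact (hc hS).2.2 U hU
  refine ⟨S, hSB, hSd, hSO, fun x hx ↦ mem_closure_iff.2 fun V hV hxV ↦ ?_⟩
  by_contra hVS
  obtain ⟨W, hWB, hxW, hWVO⟩ := hB.exists_subset_of_mem_open (mem_inter hxV hx) (hV.inter hO)
  have hWS : ∀ U ∈ S, Disjoint W U := fun U hU ↦ Set.disjoint_left.2 fun y hyW hyU ↦
    hVS ⟨y, (hWVO hyW).1, U, hU, hyU⟩
  have hinsert : insert W S ∈ 𝓕 := by
    refine ⟨insert_subset hWB hSB, hSd.insert fun U hU _ ↦ hWS U hU, ?_⟩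
    rintro U (rfl | hU)
    exacts [⟨⟨x, hxW⟩, hWVO.trans inter_subset_right⟩, hSO U hU]
  have hWmem : W ∈ S := hmax hinsert (subset_insert W S) (mem_insert W S)
  exact Set.disjoint_left.1 (hWS W hWmem) hxW hxW

theorem exists_countable_dependsOn_dense_subset [∀ i, SeparableSpace (X i)]
    {O : Set (∀ i, X i)} (hO : IsOpen O) :
    ∃ C : Set ι, C.Countable ∧ ∃ U ⊆ O, DependsOn (· ∈ U) C ∧ O ⊆ closure U := by
  obtain ⟨S, hSB, hSd, hSO, hdense⟩ :=
    exists_pairwiseDisjoint_subset_basis_dense isTopologicalBasis_isOpen_dependsOn_finset hO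
  have hS : S.Countable := countable_of_isOpen_of_pairwiseDisjoint_pi hSd
    (fun U hU ↦ (hSB hU).1) fun U hU ↦ (hSO U hU).1
  choose! I hI using fun U (hU : U ∈ S) ↦ (hSB hU).2
  refine ⟨⋃ U ∈ S, I U, hS.biUnion fun U _ ↦ (I U).countable_toSet, ⋃₀ S,
    sUnion_subset fun U hU ↦ (hSO U hU).2, fun x y hxy ↦ ?_, hdense⟩
  refine propext (exists_congr fun U ↦ and_congr_right fun hU ↦ ?_)
  exact iff_of_eq (hI U hU fun i hi ↦ hxy i (mem_iUnion₂.2 ⟨U, hU, hi⟩))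

theorem isOpenMap_domRestrict (C : Set ι) :
    IsOpenMap (C.domRestrict : (∀ i, X i) → ∀ i : C, X i) := by
  classical
  exact isOpenMap_fst.comp (Homeomorph.piEquivPiSubtypeProd (· ∈ C) X).isOpenMap

theorem exists_countable_disjoint_image_domRestrict [∀ i, SeparableSpace (X i)]
    {O : Set (∀ i, X i)} (hO : IsOpen O) :
    ∃ C : Set ι, C.Countable ∧ ∀ O', IsOpen O' → Disjoint O O' →
      Disjoint (C.domRestrict '' O) (C.domRestrict '' O') := by
  obtain ⟨C, hC, U, hUO, hUC, hdense⟩ := exists_countable_dependsOn_dense_subset hO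
  refine ⟨C, hC, fun O' hO' hOO' ↦ ?_⟩
  have hUO' : Disjoint (C.domRestrict '' U) (C.domRestrict '' O') := by
    rw [Set.disjoint_left]
    rintro _ ⟨x, hxU, rfl⟩ ⟨y, hyO', hyx⟩
    have hyU : y ∈ U := (hUC fun i hi ↦ congrFun hyx ⟨i, hi⟩).mpr hxU
    exact Set.disjoint_left.1 hOO' (hUO hyU) hyO'
  refine (hUO'.closure_left (isOpenMap_domRestrict C O' hO')).mono_left ?_
  exact (image_mono hdense).trans
    (image_closure_subset_closure_image (Pi.continuous_domRestrict C))

end Product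

section Faces

variable {ι T : Type*} {X : ι → Type*}

/-- The image of `e` meets every face of the product obtained by fixing countably many
coordinates. It is used both for a space mapped into a product and for `C_p(T, M)` inside `M ^ T`,
where it says that every map is continuously interpolated on every countable set. -/
def ProjectsOntoCountableFaces (e : T → ∀ i, X i) : Prop :=
  ∀ C : Set ι, C.Countable → ∀ x : ∀ i, X i, ∃ t, ∀ i ∈ C, e t i = x i

namespace ProjectsOntoCountableFaces

variable [∀ i, TopologicalSpace (X i)] {e : T → ∀ i, X i}

theorem exists_mem_of_isGδ (he : ProjectsOntoCountableFaces e) {G : Set (∀ i, X i)} (hG : IsGδ G)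
    {x : ∀ i, X i} (hx : x ∈ G) {C : Set ι} (hC : C.Countable) :
    ∃ t, e t ∈ G ∧ ∀ i ∈ C, e t i = x i := by
  obtain ⟨D, hD, hDG⟩ := exists_countable_forall_mem_of_isGδ_pi hG hx
  obtain ⟨t, ht⟩ := he (C ∪ D) (hC.union hD) x
  exact ⟨t, hDG _ fun i hi ↦ ht i (.inr hi), fun i hi ↦ ht i (.inl hi)⟩

theorem denseRange (he : ProjectsOntoCountableFaces e) : DenseRange e :=
  dense_iff_inter_open.2 fun _ hU ⟨_, hx⟩ ↦
    let ⟨t, ht, _⟩ := he.exists_mem_of_isGδ hU.isGδ hx countable_empty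
    ⟨e t, ht, t, rfl⟩

variable [TopologicalSpace T]

theorem baireSpace [BaireSpace (∀ i, X i)] (he : ProjectsOntoCountableFaces e)
    (hind : IsInducing e) : BaireSpace T := by
  refine ⟨fun D hDo hDd ↦ dense_iff_inter_open.2 fun U hU hUne ↦ ?_⟩
  choose W hWo hWD using fun n ↦ hind.isOpen_iff.1 (hDo n)
  obtain ⟨V, hVo, rfl⟩ := hind.isOpen_iff.1 hU
  have hWd (n : ℕ) : Dense (W n) := by
    refine (he.denseRange.dense_image hind.continuous (hDd n)).mono ?_
    rw [← hWD n]
    exact image_preimage_subset e (W n)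
  obtain ⟨t₀, ht₀⟩ := hUne
  obtain ⟨x, hxV, hxW⟩ := (dense_iInter_of_isOpen_nat hWo hWd).inter_open_nonempty V hVo ⟨_, ht₀⟩
  obtain ⟨t, ⟨htV, htW⟩, -⟩ := he.exists_mem_of_isGδ
    (hVo.isGδ.inter (.iInter fun n ↦ (hWo n).isGδ)) ⟨hxV, hxW⟩ countable_empty
  refine ⟨t, htV, mem_iInter.2 fun n ↦ ?_⟩
  rw [← hWD n]
  exact mem_iInter.1 htW n

theorem isOpenQuotientMap_domRestrict_comp [∀ i, Nonempty (X i)] (he : ProjectsOntoCountableFaces e)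
    (hind : IsInducing e) {C : Set ι} (hC : C.Countable) :
    IsOpenQuotientMap (C.domRestrict ∘ e) := by
  refine ⟨fun z ↦ ?_, (Pi.continuous_domRestrict C).comp hind.continuous, fun U hU ↦ ?_⟩
  · obtain ⟨x, rfl⟩ := Subtype.surjective_restrict (· ∈ C) z
    obtain ⟨t, ht⟩ := he C hC x
    exact ⟨t, funext fun i ↦ ht i i.2⟩
  · obtain ⟨O, hO, rfl⟩ := hind.isOpen_iff.1 hU
    suffices C.domRestrict ∘ e '' (e ⁻¹' O) = C.domRestrict '' O from
      this ▸ isOpenMap_domRestrict C O hO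
    refine Subset.antisymm ?_ ?_
    · rw [image_comp]
      exact image_mono (image_preimage_subset e O)
    · rintro _ ⟨x, hx, rfl⟩
      obtain ⟨t, htO, htx⟩ := he.exists_mem_of_isGδ hO.isGδ hx hC
      exact ⟨t, htO, funext fun i ↦ htx i i.2⟩

theorem exists_countable_factorsThrough_domRestrict_comp {M : Type*} [TopologicalSpace M]
    [T2Space M] [SecondCountableTopology M] [∀ i, SeparableSpace (X i)]
    (he : ProjectsOntoCountableFaces e) (hind : IsInducing e) {f : T → M} (hf : Continuous f) :
    ∃ C : Set ι, C.Countable ∧ f.FactorsThrough (C.domRestrict ∘ e) := by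
  choose O hO hOf using fun V : countableBasis M ↦
    hind.isOpen_iff.1 ((isOpen_of_mem_countableBasis V.2).preimage hf)
  choose C hC hCO using fun V ↦ exists_countable_disjoint_image_domRestrict (hO V)
  have hdisj (V W : countableBasis M) (hVW : Disjoint V.1 W.1) : Disjoint (O V) (O W) := by
    refine disjoint_iff_inter_eq_empty.2 (not_nonempty_iff_eq_empty.1 fun hne ↦ ?_)
    obtain ⟨t, htV, htW⟩ := he.denseRange.exists_mem_open ((hO V).inter (hO W)) hne
    exact hVW.le_bot ⟨(hOf V).subset htV, (hOf W).subset htW⟩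
  refine ⟨⋃ V, C V, countable_iUnion hC, fun s t hst ↦ ?_⟩
  by_contra hne
  obtain ⟨U, U', hU, hU', hsU, htU', hUU'⟩ := t2_separation hne
  obtain ⟨V, hV, hsV, hVU⟩ := (isBasis_countableBasis M).exists_subset_of_mem_open hsU hU
  obtain ⟨W, hW, htW, hWU'⟩ := (isBasis_countableBasis M).exists_subset_of_mem_open htU' hU'
  lift V to countableBasis M using hV
  lift W to countableBasis M using hW
  refine (hCO V (O W) (hO W) (hdisj V W (hUU'.mono hVU hWU'))).le_bot
    ⟨⟨e s, (hOf V).superset hsV, rfl⟩, e t, (hOf W).superset htW, funext fun i ↦ ?_⟩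
  exact (congrFun hst ⟨i, mem_iUnion.2 ⟨V, i.2⟩⟩).symm

theorem exists_continuous_extension {M : Type*} [TopologicalSpace M]
    [T2Space M] [SecondCountableTopology M] [∀ i, SeparableSpace (X i)] [∀ i, Nonempty (X i)]
    (he : ProjectsOntoCountableFaces e) (hind : IsInducing e) {f : T → M} (hf : Continuous f) :
    ∃ F : (∀ i, X i) → M, Continuous F ∧ F ∘ e = f := by
  obtain ⟨C, hC, hfC⟩ := he.exists_countable_factorsThrough_domRestrict_comp hind hf
  let p : C(T, ∀ i : C, X i) :=
    ⟨C.domRestrict ∘ e, (Pi.continuous_domRestrict C).comp hind.continuous⟩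
  have hp : IsQuotientMap p := (he.isOpenQuotientMap_domRestrict_comp hind hC).isQuotientMap
  let F : C(∀ i : C, X i, M) := hp.lift ⟨f, hf⟩ hfC
  exact ⟨F ∘ C.domRestrict, F.continuous.comp (Pi.continuous_domRestrict C),
    congrArg DFunLike.coe (hp.lift_comp ⟨f, hf⟩ hfC)⟩

end ProjectsOntoCountableFaces

end Faces

section Generic

variable {T M : Type*} [TopologicalSpace T] [TotallySeparatedSpace T]

theorem exists_isClopen_mem_disjoint_finset_s13 {t : T} {I : Finset T} (ht : t ∉ I) :
    ∃ U : Set T, IsClopen U ∧ t ∈ U ∧ ∀ i ∈ I, i ∉ U := by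
  have hsep (i : I) : ∃ U : Set T, IsClopen U ∧ t ∈ U ∧ ↑i ∉ U :=
    exists_isClopen_of_totally_separated fun h ↦ ht (h ▸ i.2)
  choose U hU htU hiU using hsep
  exact ⟨⋂ i, U i, isClopen_iInter_of_finite hU, mem_iInter.2 htU,
    fun i hi hiI ↦ hiU ⟨i, hi⟩ (mem_iInter.1 hiI ⟨i, hi⟩)⟩

variable [TopologicalSpace M]

theorem exists_continuous_eqOn_finset_apply_eq {f : T → M} (hf : Continuous f) {t : T}
    {I : Finset T} (ht : t ∉ I) (y : M) :
    ∃ g : T → M, Continuous g ∧ (∀ i ∈ I, g i = f i) ∧ g t = y := by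
  classical
  obtain ⟨U, hU, htU, hIU⟩ := exists_isClopen_mem_disjoint_finset_s13 ht
  refine ⟨U.piecewise (fun _ ↦ y) f, continuous_const.piecewise ?_ hf,
    fun i hi ↦ piecewise_eq_of_notMem _ _ _ (hIU i hi), piecewise_eq_of_mem _ _ _ htU⟩
  simp [hU.frontier_eq]

theorem dense_setOf_exists_ge_apply_mem {z : ℕ → T} (hz : Injective z) {V : Set M}
    (hV : V.Nonempty) (n : ℕ) : Dense {f : Cp T M | ∃ k ≥ n, f.1 (z k) ∈ V} := by
  obtain ⟨y, hy⟩ := hV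
  refine dense_iff_inter_open.2 fun W hW ⟨f, hfW⟩ ↦ ?_
  obtain ⟨O, hO, rfl⟩ := isOpen_induced_iff.1 hW
  obtain ⟨I, hI⟩ := exists_finset_forall_mem_of_isOpen_pi hO hfW
  obtain ⟨k, hkn, hkI⟩ : ∃ k ≥ n, z k ∉ I := by
    have hfin : (z ⁻¹' I).Finite := I.finite_toSet.preimage hz.injOn
    obtain ⟨k, hk, hnk⟩ := hfin.infinite_compl.exists_gt n
    exact ⟨k, hnk.le, hk⟩
  obtain ⟨g, hg, hgI, rfl⟩ := exists_continuous_eqOn_finset_apply_eq f.2 hkI y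
  exact ⟨⟨g, hg⟩, hI g hgI, k, hkn, hy⟩

theorem exists_continuous_forall_mapClusterPt [SecondCountableTopology M] [Nonempty M]
    [BaireSpace (Cp T M)] {z : ℕ → T} (hz : Injective z) :
    ∃ f : T → M, Continuous f ∧ ∀ y, MapClusterPt y Filter.atTop (f ∘ z) := by
  let D (p : countableBasis M × ℕ) : Set (Cp T M) := {f | ∃ k ≥ p.2, f.1 (z k) ∈ p.1.1}
  have hD (p) : IsOpen (D p) := by
    have hDp : D p = ⋃ k ≥ p.2, {f : Cp T M | f.1 (z k) ∈ p.1.1} := by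
      ext f
      simp [D]
    rw [hDp]
    exact isOpen_biUnion fun k _ ↦ (isOpen_of_mem_countableBasis p.1.2).preimage
      ((continuous_apply (z k)).comp continuous_subtype_val)
  have hdense : Dense (⋂ p, D p) := dense_iInter_of_isOpen hD fun p ↦
    dense_setOf_exists_ge_apply_mem hz (nonempty_of_mem_countableBasis p.1.2) p.2
  have : Nonempty (Cp T M) := ⟨⟨fun _ ↦ Classical.arbitrary M, continuous_const⟩⟩
  obtain ⟨f, hf⟩ := hdense.nonempty
  refine ⟨f.1, f.2, fun y ↦ (isBasis_countableBasis M).nhds_hasBasis.mapClusterPt_iff_frequently.2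
    fun V hV ↦ Filter.frequently_atTop.2 fun n ↦ mem_iInter.1 hf (⟨V, hV.1⟩, n)⟩

end Generic

section PeanoImage

/-- Compact, connected and locally connected; for metrizable spaces these are the Peano continua. -/
abbrev IsPeano (Y : Type*) [TopologicalSpace Y] : Prop :=
  CompactSpace Y ∧ ConnectedSpace Y ∧ LocallyConnectedSpace Y

theorem IsPeano.of_surjective {Y Z : Type*} [TopologicalSpace Y] [TopologicalSpace Z] [T2Space Z]
    (hY : IsPeano Y) {f : Y → Z} (hf : Continuous f) (hsurj : Surjective f) : IsPeano Z := by
  obtain ⟨_, _, _⟩ := hY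
  exact ⟨hsurj.compactSpace hf, hsurj.connectedSpace hf,
    (IsQuotientMap.of_surjective_continuous hsurj hf).isCoinducing.locallyConnectedSpace⟩

theorem IsPeano.pi {ι : Type*} {X : ι → Type*} [∀ i, TopologicalSpace (X i)]
    (hX : ∀ i, IsPeano (X i)) : IsPeano (∀ i, X i) := by
  have (i : ι) : CompactSpace (X i) := (hX i).1
  have (i : ι) : ConnectedSpace (X i) := (hX i).2.1
  have (i : ι) : LocallyConnectedSpace (X i) := (hX i).2.2
  exact ⟨inferInstance, inferInstance, inferInstance⟩

theorem exists_mapClusterPt_apply_eq {α Y Z : Type*} [TopologicalSpace Y] [CompactSpace Y]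
    [TopologicalSpace Z] [T2Space Z] {F : Y → Z} (hF : Continuous F) {l : Filter α} {u : α → Y}
    {z : Z} (hz : MapClusterPt z l (F ∘ u)) : ∃ y, MapClusterPt y l u ∧ F y = z := by
  obtain ⟨U, hUl, hUz⟩ := mapClusterPt_iff_ultrafilter.1 hz
  have hUy : Filter.Tendsto u U (𝓝 (U.map u).lim) := (U.map u).le_nhds_lim
  exact ⟨_, mapClusterPt_iff_ultrafilter.2 ⟨U, hUl, hUy⟩,
    tendsto_nhds_unique ((hF.tendsto _).comp hUy) hUz⟩

theorem isPeano_of_forall_mapClusterPt {ι M : Type*} {X : ι → Type*} [∀ i, TopologicalSpace (X i)]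
    [∀ i, CompactSpace (X i)] [∀ i, T1Space (X i)] [TopologicalSpace M] [T2Space M]
    {F : (∀ i, X i) → M} (hF : Continuous F) {u : ℕ → ∀ i, X i} {x₀ : ∀ i, X i}
    (hX : ∀ i, IsPeano (X i) ∨ ∀ᶠ n in Filter.atTop, u n i = x₀ i)
    (hFu : ∀ y, MapClusterPt y Filter.atTop (F ∘ u)) : IsPeano M := by
  classical
  let J : Set ι := {i | IsPeano (X i)}
  let insertBase (z : ∀ i : J, X i) (i : ι) : X i := if h : i ∈ J then z ⟨i, h⟩ else x₀ i
  have hinsertBase : Continuous insertBase := by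
    refine continuous_pi fun i ↦ ?_
    by_cases h : i ∈ J
    · simpa only [insertBase, h, dite_true] using continuous_apply (⟨i, h⟩ : J)
    · simpa only [insertBase, h, dite_false] using continuous_const
  refine (IsPeano.pi fun i : J ↦ i.2).of_surjective (hF.comp hinsertBase) fun y ↦ ?_
  obtain ⟨x, hx, rfl⟩ := exists_mapClusterPt_apply_eq hF (hFu y)
  refine ⟨J.domRestrict x, congrArg F (funext fun i ↦ ?_)⟩
  by_cases h : i ∈ J
  · simp only [insertBase, h, dite_true, domRestrict_apply]
  · have hxi : MapClusterPt (x i) Filter.atTop (u · i) :=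
      hx.continuousAt_comp (continuous_apply i).continuousAt
    simp only [insertBase, h, dite_false]
    by_contra hne
    obtain ⟨n, hn, hn'⟩ := ((hxi.frequently (isOpen_ne.mem_nhds (Ne.symm hne))).and_eventually
      ((hX i).resolve_left h)).exists
    exact hn hn'

end PeanoImage

section SigmaProduct

open Cardinal

/-- The `Σ`-product based at `x₀`: the points differing from `x₀` in countably many coordinates. -/
def sigmaProduct {ι : Type*} {X : ι → Type*} (x₀ : ∀ i, X i) : Set (∀ i, X i) :=
  {x | {i | x i ≠ x₀ i}.Countable}

theorem piecewise_mem_sigmaProduct {ι : Type*} {X : ι → Type*} (x x₀ : ∀ i, X i) {C : Set ι}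
    [∀ i, Decidable (i ∈ C)] (hC : C.Countable) : C.piecewise x x₀ ∈ sigmaProduct x₀ :=
  hC.mono fun _ hi ↦ by_contra fun hiC ↦ hi (piecewise_eq_of_notMem _ _ _ hiC)

theorem mk_sigmaProduct_le {ι : Type u} {X : ι → Type u} (x₀ : ∀ i, X i) :
    #(sigmaProduct x₀) ≤ max #(Σ i, X i) ℵ₀ ^ (ℵ₀ : Cardinal.{u}) := by
  let deviations (x : sigmaProduct x₀) : {S : Set (Σ i, X i) // #S ≤ ℵ₀} :=
    ⟨(fun i ↦ ⟨i, x.1 i⟩) '' {i | x.1 i ≠ x₀ i}, le_aleph0_iff_set_countable.2 (x.2.image _)⟩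
  have mem_deviations (x : sigmaProduct x₀) (i : ι) (a : X i) :
      ⟨i, a⟩ ∈ (deviations x).1 ↔ x.1 i = a ∧ a ≠ x₀ i := by
    constructor
    · rintro ⟨j, hj, h⟩
      cases h
      exact ⟨rfl, hj⟩
    · rintro ⟨rfl, h⟩
      exact ⟨i, h, rfl⟩
  have hdeviations : Injective deviations := by
    refine fun x y hxy ↦ Subtype.ext (funext fun i ↦ ?_)
    have h (a : X i) : (x.1 i = a ∧ a ≠ x₀ i) ↔ (y.1 i = a ∧ a ≠ x₀ i) := by
      rw [← mem_deviations, ← mem_deviations, hxy]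
    by_cases hx : x.1 i = x₀ i
    · by_contra hne
      exact hne ((h _).2 ⟨rfl, fun hy ↦ hne (hx.trans hy.symm)⟩).1
    · exact ((h _).1 ⟨rfl, hx⟩).1.symm
  exact (mk_le_of_injective hdeviations).trans (mk_bounded_set_le _ _)

theorem exists_forall_mem_not_countable_fiber {S Y : Type u} [Uncountable S] {Z : Set Y}
    (hZne : Z.Nonempty) (hZ : #Z ≤ #S) : ∃ ρ : S → Y, ∀ z ∈ Z, ¬(ρ ⁻¹' {z}).Countable := by
  have : Nonempty (Z × S) := hZne.to_subtype.elim fun z ↦ ⟨z, Classical.arbitrary S⟩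
  have hle : #(Z × S) ≤ #S := by
    rw [mk_prod, lift_id, lift_id]
    exact mul_le_of_le (aleph0_le_mk S) hZ le_rfl
  obtain ⟨φ⟩ := hle
  obtain ⟨g, hg⟩ : ∃ g : S → Z × S, Surjective g := ⟨invFun φ, invFun_surjective φ.injective⟩
  refine ⟨fun s ↦ (g s).1, fun z hz hcount ↦ not_countable_univ (α := S) ?_⟩
  refine (hcount.image fun s ↦ (g s).2).mono fun t _ ↦ ?_
  obtain ⟨s, hs⟩ := hg (⟨z, hz⟩, t)
  exact ⟨s, by simp [hs], congrArg Prod.snd hs⟩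

theorem mk_set_power_aleph0 (H : Type u) [Infinite H] :
    #(Set H) ^ (ℵ₀ : Cardinal.{u}) = #(Set H) := by
  rw [mk_set, ← power_mul, mul_aleph0_eq (aleph0_le_mk H)]

end SigmaProduct

/-- A coordinate of the product containing the space `T` under construction: a compact subspace of
`H`, together with values in it prescribed along a sequence of points of `T`. When the subspace is
not Peano, only finitely many values are prescribed. -/
structure Coordinate (T H : Type*) [TopologicalSpace H] where
  space : Set H
  points : ℕ → T
  value : ℕ → space
  compactSpace : CompactSpace space
  isPeano_or_finite : IsPeano space ∨ (range points).Finite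

namespace Coordinate

attribute [instance] Coordinate.compactSpace

variable {T H : Type*} [TopologicalSpace H]

/-- The coordinate at `i` of the base point of the `Σ`-product; any point of `i.space` would do. -/
def basePoint (i : Coordinate T H) : i.space := i.value 0

theorem injective_space_points_value :
    Injective fun i : Coordinate T H ↦ (i.space, i.points, fun n ↦ (i.value n : H)) := by
  rintro ⟨A, p, v, _, _⟩ ⟨B, q, w, _, _⟩ h
  simp only [Prod.mk.injEq] at h
  obtain ⟨rfl, rfl, hvw⟩ := h
  obtain rfl : v = w := funext fun n ↦ Subtype.ext (congrFun hvw n)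
  rfl

/-- The point of the product attached to `t`: the prescribed values override those of `ρ`. -/
noncomputable def evaluation (ρ : T → ∀ i : Coordinate T H, i.space) (t : T)
    (i : Coordinate T H) : i.space :=
  extend i.points i.value (ρ · i) t

section Evaluation

variable {ρ : T → ∀ i : Coordinate T H, i.space} {i : Coordinate T H}

theorem evaluation_of_notMem_range {t : T} (ht : t ∉ range i.points) :
    evaluation ρ t i = ρ t i :=
  extend_apply' _ _ _ ht

theorem evaluation_points (hi : i.value.FactorsThrough i.points) (n : ℕ) :
    evaluation ρ (i.points n) i = i.value n :=
  hi.extend_apply _ n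

theorem projectsOntoCountableFaces_evaluation
    (hfib : ∀ x ∈ sigmaProduct basePoint, ¬(ρ ⁻¹' {x}).Countable) :
    ProjectsOntoCountableFaces (evaluation ρ) := by
  classical
  intro C hC x
  have hfibx := hfib _ (piecewise_mem_sigmaProduct x basePoint hC)
  obtain ⟨t, ht, htC⟩ := not_subset.1 fun h ↦
    hfibx ((hC.biUnion fun i _ ↦ countable_range i.points).mono h)
  refine ⟨t, fun i hi ↦ ?_⟩
  have hti : t ∉ range i.points := fun h ↦ htC (mem_biUnion hi h)
  rw [evaluation_of_notMem_range hti, mem_singleton_iff.1 ht, piecewise_eq_of_mem _ _ _ hi]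

theorem exists_injective_eventually_evaluation_eq_basePoint
    (hbase : (ρ ⁻¹' {basePoint}).Infinite) :
    ∃ z : ℕ → T, Injective z ∧ ∀ i : Coordinate T H,
      IsPeano i.space ∨ ∀ᶠ n in Filter.atTop, evaluation ρ (z n) i = i.basePoint := by
  let z : ℕ ↪ ρ ⁻¹' {basePoint} := hbase.natEmbedding
  have hz : Injective fun n ↦ (z n : T) := Subtype.val_injective.comp z.injective
  refine ⟨_, hz, fun i ↦ i.isPeano_or_finite.imp_right fun hfin ↦ ?_⟩
  have hev : ∀ᶠ n in Filter.cofinite, (z n : T) ∉ range i.points :=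
    (hfin.preimage hz.injOn).eventually_cofinite_notMem
  rw [Nat.cofinite_eq_atTop] at hev
  filter_upwards [hev] with n hn
  rw [evaluation_of_notMem_range hn, mem_singleton_iff.1 (z n).2]

theorem exists_finite_space_evaluation_ne [Nontrivial H]
    (ρ : T → ∀ i : Coordinate T H, i.space) {s t : T} (hst : s ≠ t) :
    ∃ i : Coordinate T H, i.space.Finite ∧ evaluation ρ s i ≠ evaluation ρ t i := by
  obtain ⟨a, b, hab⟩ := exists_pair_ne H
  let i : Coordinate T H :=
    { space := {a, b}
      points n := if n = 0 then s else t
      value n := if n = 0 then ⟨a, by simp⟩ else ⟨b, by simp⟩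
      compactSpace := isCompact_iff_compactSpace.1 (toFinite _).isCompact
      isPeano_or_finite := .inr ((toFinite {s, t}).subset (by grind)) }
  have hi : i.value.FactorsThrough i.points := by grind [Function.FactorsThrough]
  refine ⟨i, toFinite _, fun h ↦ hab ?_⟩
  have hval : i.value 0 = i.value 1 := by
    rw [← evaluation_points (ρ := ρ) hi 0, ← evaluation_points (ρ := ρ) hi 1]
    exact h
  exact congrArg Subtype.val hval

variable [TopologicalSpace T]

theorem totallySeparatedSpace_of_continuous_evaluation [T1Space H] [Nontrivial H]
    (hρ : Continuous (evaluation ρ)) : TotallySeparatedSpace T := by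
  refine totallySeparatedSpace_iff_exists_isClopen.2 fun s t hst ↦ ?_
  obtain ⟨i, hi, hne⟩ := exists_finite_space_evaluation_ne ρ hst
  have := hi.to_subtype
  exact ⟨(evaluation ρ · i) ⁻¹' {evaluation ρ s i},
    (isClopen_discrete _).preimage ((continuous_apply i).comp hρ), rfl, hne.symm⟩

theorem projectsOntoCountableFaces_coe_Cp {M : Type*} [TopologicalSpace M] (hM : IsPeano M)
    {φ : M → H} (hφ : IsEmbedding φ) (hρ : Continuous (evaluation ρ)) :
    ProjectsOntoCountableFaces (Subtype.val : Cp T M → T → M) := by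
  intro A hA g
  rcases isEmpty_or_nonempty T with _ | _
  · exact ⟨⟨g, continuous_of_discreteTopology⟩, fun _ _ ↦ rfl⟩
  obtain ⟨points, hpoints⟩ := countable_iff_exists_subset_range.1 hA
  let ψ : M ≃ₜ range φ := hφ.toHomeomorph
  obtain ⟨_, _, _⟩ := hM
  let i : Coordinate T H :=
    { space := range φ
      points
      value n := ψ (g (points n))
      compactSpace := ψ.compactSpace
      isPeano_or_finite := .inl ⟨ψ.compactSpace, ψ.surjective.connectedSpace ψ.continuous,
        ψ.symm.locallyConnectedSpace⟩ }
  have hi : i.value.FactorsThrough i.points := fun m n h ↦ congrArg (ψ ∘ g) h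
  refine ⟨⟨fun t ↦ ψ.symm (evaluation ρ t i),
    ψ.symm.continuous.comp ((continuous_apply i).comp hρ)⟩, fun t ht ↦ ?_⟩
  obtain ⟨n, rfl⟩ := hpoints ht
  exact (congrArg ψ.symm (evaluation_points hi n)).trans (ψ.symm_apply_apply _)

theorem baireSpace_Cp {M : Type*} [TopologicalSpace M] [T2Space M] (hM : IsPeano M) {φ : M → H}
    (hφ : IsEmbedding φ) (hρ : Continuous (evaluation ρ)) : BaireSpace (Cp T M) :=
  have : CompactSpace M := hM.1
  (projectsOntoCountableFaces_coe_Cp hM hφ hρ).baireSpace .subtypeVal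

theorem isPeano_of_baireSpace_Cp [T1Space H] [SecondCountableTopology H] [TotallySeparatedSpace T]
    (hfib : ∀ x ∈ sigmaProduct basePoint, ¬(ρ ⁻¹' {x}).Countable)
    (hρ : IsInducing (evaluation ρ)) {M : Type*} [TopologicalSpace M] [T2Space M]
    [SecondCountableTopology M] [Nonempty M] [BaireSpace (Cp T M)] : IsPeano M := by
  have hbase : (ρ ⁻¹' {basePoint}).Infinite := fun hfin ↦
    hfib basePoint (by simp [sigmaProduct]) hfin.countable
  have (i : Coordinate T H) : Nonempty i.space := ⟨i.basePoint⟩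
  obtain ⟨z, hz, hzX⟩ := exists_injective_eventually_evaluation_eq_basePoint hbase
  obtain ⟨f, hf, hfz⟩ := exists_continuous_forall_mapClusterPt (M := M) hz
  obtain ⟨F, hF, rfl⟩ :=
    (projectsOntoCountableFaces_evaluation hfib).exists_continuous_extension hρ hf
  exact isPeano_of_forall_mapClusterPt hF hzX hfz

end Evaluation

open Cardinal in
theorem mk_le {T H : Type u} [TopologicalSpace H] [Infinite T] (hH : #(Set H) ≤ #T)
    (hT : #T ^ (ℵ₀ : Cardinal.{u}) = #T) : #(Coordinate T H) ≤ #T := by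
  have haleph0 : ℵ₀ ≤ #T := aleph0_le_mk T
  have hHT : #H ≤ #T := (mk_le_of_injective singleton_injective).trans hH
  calc #(Coordinate T H) ≤ #(Set H × (ℕ → T) × (ℕ → H)) :=
        mk_le_of_injective injective_space_points_value
    _ = #(Set H) * (#T ^ (ℵ₀ : Cardinal.{u}) * #H ^ (ℵ₀ : Cardinal.{u})) := by simp
    _ ≤ #T := by
        refine mul_le_of_le haleph0 hH (mul_le_of_le haleph0 hT.le ?_)
        exact (power_le_power_right hHT).trans hT.le

open Cardinal in
theorem exists_not_countable_fiber {T H : Type u} [TopologicalSpace H] [Infinite T]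
    (hH : #(Set H) ≤ #T) (hT : #T ^ (ℵ₀ : Cardinal.{u}) = #T) :
    ∃ ρ : T → ∀ i : Coordinate T H, i.space,
      ∀ x ∈ sigmaProduct basePoint, ¬(ρ ⁻¹' {x}).Countable := by
  have : Uncountable T := by
    rw [← aleph0_lt_mk_iff, ← hT]
    exact (cantor ℵ₀).trans_le (power_le_power_right (ofNat_le_aleph0.trans (aleph0_le_mk T)))
  refine exists_forall_mem_not_countable_fiber ⟨basePoint, by simp [sigmaProduct]⟩ ?_
  have hHT : #H ≤ #T := (mk_le_of_injective singleton_injective).trans hH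
  have hsigma : #(Σ i : Coordinate T H, i.space) ≤ #T :=
    calc #(Σ i : Coordinate T H, i.space) ≤ #(Coordinate T H × H) :=
          mk_le_of_injective (f := fun x ↦ (x.1, x.2.1)) (by
            rintro ⟨i, a⟩ ⟨j, b⟩ h
            obtain ⟨rfl, hab⟩ := Prod.mk.inj h
            exact congrArg (Sigma.mk i) (Subtype.ext hab))
      _ ≤ #T := by
          rw [mk_prod, lift_id, lift_id]
          exact mul_le_of_le (aleph0_le_mk T) (mk_le hH hT) hHT
  calc #(sigmaProduct basePoint) ≤ max #(Σ i : Coordinate T H, i.space) ℵ₀ ^ (ℵ₀ : Cardinal.{u}) :=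
        mk_sigmaProduct_le basePoint
    _ ≤ #T ^ (ℵ₀ : Cardinal.{u}) := power_le_power_right (max_le hsigma (aleph0_le_mk T))
    _ = #T := hT

end Coordinate

theorem exists_isEmbedding_hilbertCube (M : Type*) [TopologicalSpace M] [T3Space M]
    [SecondCountableTopology M] : ∃ φ : M → ℕ → unitInterval, IsEmbedding φ :=
  letI := metrizableSpaceMetric M
  Metric.PiNatEmbed.exists_embedding_to_hilbert_cube

theorem statement13_general :
    ∃ (T : Type) (_ : TopologicalSpace T), T1Space T ∧ CompletelyRegularSpace T ∧
      TotallySeparatedSpace T ∧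
      ∀ (M : Type u) (_ : TopologicalSpace M), T2Space M → SecondCountableTopology M →
        Nonempty M →
        (BaireSpace (Cp T M) ↔
          (CompactSpace M ∧ ConnectedSpace M ∧ LocallyConnectedSpace M)) := by
  let H : Type := ℕ → unitInterval
  obtain ⟨ρ, hfib⟩ := Coordinate.exists_not_countable_fiber (T := Set H) (H := H) le_rfl
    (mk_set_power_aleph0 H)
  let τ : TopologicalSpace (Set H) := .induced (Coordinate.evaluation ρ) inferInstance
  have hρ : IsInducing (Coordinate.evaluation ρ) := ⟨rfl⟩
  have hsep : TotallySeparatedSpace (Set H) :=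
    Coordinate.totallySeparatedSpace_of_continuous_evaluation hρ.continuous
  refine ⟨Set H, τ, inferInstance, hρ.completelyRegularSpace, hsep,
    fun M _ _ _ _ ↦ ⟨fun _ ↦ ?_, fun hM ↦ ?_⟩⟩
  · exact Coordinate.isPeano_of_baireSpace_Cp hfib hρ
  · have := hM.1
    obtain ⟨φ, hφ⟩ := exists_isEmbedding_hilbertCube M
    exact Coordinate.baireSpace_Cp hM hφ hρ.continuous

/-- There is a totally disconnected (totally separated) Tychonoff space `T` such that,
for every nonempty separable metric space `M`, the space `C_p(T, M)` is Baire iff `M` is a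
Peano continuum (a nonempty connected, locally connected, compact metric space). -/
theorem statement13 :
    ∃ (T : Type) (_ : TopologicalSpace T), T1Space T ∧ CompletelyRegularSpace T ∧
      TotallySeparatedSpace T ∧
      ∀ (M : Type) (_ : MetricSpace M), Nonempty M → TopologicalSpace.SeparableSpace M →
        (BaireSpace (Cp T M) ↔
          (CompactSpace M ∧ ConnectedSpace M ∧ LocallyConnectedSpace M)) := by
  obtain ⟨T, τ, hT1, hTcr, hTsep, hT⟩ := statement13_general
  exact ⟨T, τ, hT1, hTcr, hTsep, fun M _ _ _ ↦
    hT M _ inferInstance (UniformSpace.secondCountable_of_separable M) ‹_›⟩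
end

section
/- A Tychonoff space X is totally disconnected (i.e., every quasi-component is a singleton) if, and only if, C_p(X, 𝔻) is dense in the product space 𝔻^X. -/
open Set Topology

/-!
Basic open sets of `Y ^ X` restrict only finitely many values, so density of `C_p(X, Y)` follows
from interpolation at finitely many points by continuous functions. In a totally separated space a
point can be cut off from a finite set by a clopen set, and changing a continuous function to a
constant on that set keeps it continuous, so the prescribed values can be attained one point at a
time. Conversely, if `W` is clopen in `Y` with `a ∈ W` and `b ∉ W`, density yields a continuous `g`
with `g x ∈ W` and `g y ∉ W`, and `g ⁻¹' W` separates `x` from `y`.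
-/

section Interpolation

variable {X Y : Type*} [TopologicalSpace X] [TopologicalSpace Y]

theorem exists_isClopen_mem_disjoint_of_finite [TotallySeparatedSpace X] {s : Set X}
    (hs : s.Finite) {a : X} (ha : a ∉ s) : ∃ U : Set X, IsClopen U ∧ a ∈ U ∧ Disjoint U s := by
  have separate : ∀ b ∈ s, ∃ U : Set X, IsClopen U ∧ a ∈ U ∧ b ∉ U := fun b hb =>
    exists_isClopen_of_totally_separated (ne_of_mem_of_not_mem hb ha).symm
  choose! U hU haU hbU using separate
  refine ⟨⋂ b ∈ s, U b, hs.isClopen_biInter hU, mem_iInter₂.2 haU, ?_⟩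
  exact disjoint_right.2 fun b hb hmem => hbU b hb (mem_iInter₂.1 hmem b hb)

theorem exists_continuous_eqOn_of_finite [TotallySeparatedSpace X] {s : Set X} (hs : s.Finite)
    (f : X → Y) : ∃ g : X → Y, Continuous g ∧ EqOn g f s := by
  classical
  induction s, hs using Set.Finite.induction_on with
  | empty =>
    cases isEmpty_or_nonempty X with
    | inl _ => exact ⟨f, continuous_of_const fun x => isEmptyElim x, eqOn_empty _ _⟩
    | inr hX => exact ⟨fun _ => f hX.some, continuous_const, eqOn_empty _ _⟩
  | @insert a s ha hs ih =>
    obtain ⟨g, hg, hgf⟩ := ih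
    obtain ⟨U, hU, haU, hUs⟩ := exists_isClopen_mem_disjoint_of_finite hs ha
    refine ⟨U.piecewise (fun _ => f a) g, ?_, ?_⟩
    · exact Continuous.piecewise (by simp [hU.frontier_eq]) continuous_const hg
    · rintro x (rfl | hx)
      · exact piecewise_eq_of_mem _ _ _ haU
      · exact (piecewise_eq_of_notMem _ _ _ (hUs.notMem_of_mem_right hx)).trans (hgf hx)

end Interpolation

theorem dense_of_forall_finset_exists_eqOn {ι : Type*} {Y : ι → Type*}
    [∀ i, TopologicalSpace (Y i)] {D : Set (∀ i, Y i)}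
    (h : ∀ (f : ∀ i, Y i) (s : Finset ι), ∃ g ∈ D, ∀ i ∈ s, g i = f i) : Dense D := by
  refine dense_iff_inter_open.2 fun O hO ⟨f, hf⟩ => ?_
  obtain ⟨s, u, hu, hsub⟩ := isOpen_pi_iff.1 hO f hf
  obtain ⟨g, hgD, hgf⟩ := h f s
  exact ⟨g, hsub fun i hi => (hgf i hi).symm ▸ (hu i hi).2, hgD⟩

section Density

variable (X Y : Type*) [TopologicalSpace X] [TopologicalSpace Y]

theorem dense_range_val_Cp [TotallySeparatedSpace X] :
    Dense (range (Subtype.val : Cp X Y → X → Y)) :=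
  dense_of_forall_finset_exists_eqOn fun f s =>
    let ⟨g, hg, hgf⟩ := exists_continuous_eqOn_of_finite s.finite_toSet f
    ⟨g, ⟨⟨g, hg⟩, rfl⟩, hgf⟩

variable {X Y}

theorem totallySeparatedSpace_of_dense_range_val_Cp [TotallySeparatedSpace Y] [Nontrivial Y]
    (h : Dense (range (Subtype.val : Cp X Y → X → Y))) : TotallySeparatedSpace X := by
  classical
  refine totallySeparatedSpace_iff_exists_isClopen.2 fun x y hxy => ?_
  obtain ⟨a, b, hab⟩ := exists_pair_ne Y
  obtain ⟨W, hW, haW, hbW⟩ := exists_isClopen_of_totally_separated hab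
  have separating_isOpen : IsOpen {g : X → Y | g x ∈ W ∧ g y ∉ W} :=
    ((hW.preimage (continuous_apply x)).diff (hW.preimage (continuous_apply y))).isOpen
  have separating_nonempty : {g : X → Y | g x ∈ W ∧ g y ∉ W}.Nonempty :=
    ⟨Function.update (fun _ => b) x a, by simpa [hxy.symm] using ⟨haW, hbW⟩⟩
  obtain ⟨_, ⟨⟨g, hg⟩, rfl⟩, hgx, hgy⟩ := h.exists_mem_open separating_isOpen separating_nonempty
  exact ⟨g ⁻¹' W, hW.preimage hg, hgx, hgy⟩

end Density

theorem statement15_general (X Y : Type*) [TopologicalSpace X] [TopologicalSpace Y]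
    [TotallySeparatedSpace Y] [Nontrivial Y] :
    TotallySeparatedSpace X ↔ Dense (range (Subtype.val : Cp X Y → X → Y)) :=
  ⟨fun _ => dense_range_val_Cp X Y, totallySeparatedSpace_of_dense_range_val_Cp⟩

/-- A Tychonoff space `X` is totally disconnected (every quasi-component is a singleton,
i.e. any two distinct points are separated by a clopen set) iff `C_p(X, 𝔻)` is dense in
`𝔻^X`. Here `𝔻 = {0,1}` is the two-point discrete space, realized as `Bool`. -/
theorem statement15 (X : Type*) [TopologicalSpace X] [T1Space X] [CompletelyRegularSpace X] :
    TotallySeparatedSpace X ↔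
      Dense (Set.range (Subtype.val : Cp X Bool → X → Bool)) :=
  statement15_general X Bool
end

section
/- Let X be an infinite totally disconnected Tychonoff space and let Y be a topological space such that C_p(X, Y) is a Baire space. Then for every sequence (V_m)_{m∈ℕ} of nonempty open subsets of Y there exists a continuous function f : X → Y such that f(X) ∩ V_m ≠ ∅ for every m ∈ ℕ. -/
open Set Topology

/-!
For nonempty open `V ⊆ Y`, the functions whose range meets `V` form an open subset of `C_p(X, Y)`,
and this set is dense: a basic open set constrains a function only on a finite set `F`, so the
function may be changed to a constant in `V` on any nonempty clopen set disjoint from `F`. Such a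
clopen set exists as soon as `X` has infinitely many clopen sets: by pigeonhole, some two distinct
ones have the same trace on `F`, and their symmetric difference is disjoint from `F`. The Baire
property then yields a function whose range meets every `V m`.
-/

open TopologicalSpace (Clopens)

section Clopens

variable {X Y : Type*} [TopologicalSpace X] [TopologicalSpace Y]

theorem exists_isClopen_nonempty_disjoint_of_infinite_clopens [Infinite (Clopens X)]
    {F : Set X} (hF : F.Finite) : ∃ C : Set X, IsClopen C ∧ C.Nonempty ∧ Disjoint F C := by
  have := hF.to_subtype
  obtain ⟨C, D, hCD, htrace⟩ :=
    Finite.exists_ne_map_eq_of_infinite fun (C : Clopens X) (a : F) ↦ (a : X) ∈ C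
  have hagree (a : X) (ha : a ∈ F) : a ∈ C ↔ a ∈ D := (congrFun htrace ⟨a, ha⟩).to_iff
  refine ⟨symmDiff (C : Set X) D, (C.2.diff D.2).union (D.2.diff C.2),
    symmDiff_nonempty.2 (SetLike.coe_injective.ne hCD), disjoint_left.2 ?_⟩
  rintro a ha (⟨haC, haD⟩ | ⟨haD, haC⟩)
  · exact haD ((hagree a ha).1 haC)
  · exact haC ((hagree a ha).2 haD)

theorem infinite_clopens_of_totallySeparatedSpace [TotallySeparatedSpace X] [Infinite X] :
    Infinite (Clopens X) := by
  let clopensThrough (x : X) : Set (Clopens X) := {C | x ∈ C}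
  have hinj : Function.Injective clopensThrough := fun x y hxy ↦ by
    by_contra hne
    obtain ⟨C, hC, hxC, hyC⟩ := exists_isClopen_of_totally_separated hne
    exact hyC ((Set.ext_iff.1 hxy ⟨C, hC⟩).1 hxC)
  exact not_finite_iff_infinite.1 fun _ ↦ (Finite.of_injective clopensThrough hinj).false

theorem continuous_piecewise_of_isClopen {C : Set X} [DecidablePred (· ∈ C)] (hC : IsClopen C)
    {f g : X → Y} (hf : Continuous f) (hg : Continuous g) : Continuous (C.piecewise f g) :=
  hf.piecewise (by simp [hC.frontier_eq]) hg

end Clopens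

section Cp

variable {X Y : Type*} [TopologicalSpace X] [TopologicalSpace Y]

theorem dense_of_forall_finset_exists_eqOn_s17 {S : Set (Cp X Y)}
    (hS : ∀ (f : Cp X Y) (F : Finset X), ∃ g ∈ S, EqOn g.1 f.1 F) : Dense S := by
  refine dense_iff_inter_open.2 ?_
  rintro _ ⟨W, hW, rfl⟩ ⟨f, hf⟩
  obtain ⟨F, u, hu, huW⟩ := isOpen_pi_iff.1 hW f.1 hf
  obtain ⟨g, hgS, hgf⟩ := hS f F
  refine ⟨g, huW fun a ha ↦ ?_, hgS⟩
  rw [hgf ha]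
  exact (hu a ha).2

theorem isOpen_setOf_range_inter_nonempty {V : Set Y} (hV : IsOpen V) :
    IsOpen {f : Cp X Y | (range f.1 ∩ V).Nonempty} := by
  have hunion : {f : Cp X Y | (range f.1 ∩ V).Nonempty} = ⋃ x, {f : Cp X Y | f.1 x ∈ V} := by
    ext f
    simp [Set.Nonempty]
  rw [hunion]
  exact isOpen_iUnion fun x ↦ hV.preimage ((continuous_apply x).comp continuous_subtype_val)

theorem dense_setOf_range_inter_nonempty [Infinite (Clopens X)] {V : Set Y}
    (hV : V.Nonempty) : Dense {f : Cp X Y | (range f.1 ∩ V).Nonempty} := by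
  classical
  refine dense_of_forall_finset_exists_eqOn_s17 fun f F ↦ ?_
  obtain ⟨C, hC, ⟨x, hxC⟩, hFC⟩ :=
    exists_isClopen_nonempty_disjoint_of_infinite_clopens F.finite_toSet
  obtain ⟨y, hyV⟩ := hV
  let g : Cp X Y :=
    ⟨C.piecewise (fun _ ↦ y) f.1, continuous_piecewise_of_isClopen hC continuous_const f.2⟩
  have hgx : g.1 x = y := piecewise_eq_of_mem C (fun _ ↦ y) f.1 hxC
  have hgf : EqOn g.1 f.1 F := fun a ha ↦
    piecewise_eq_of_notMem C (fun _ ↦ y) f.1 (disjoint_left.1 hFC ha)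
  exact ⟨g, ⟨y, ⟨x, hgx⟩, hyV⟩, hgf⟩

theorem dense_setOf_forall_range_inter_nonempty [Infinite (Clopens X)] [BaireSpace (Cp X Y)]
    {ι : Type*} [Countable ι] {V : ι → Set Y} (hV : ∀ i, IsOpen (V i))
    (hne : ∀ i, (V i).Nonempty) : Dense {f : Cp X Y | ∀ i, (range f.1 ∩ V i).Nonempty} := by
  rw [ofPred_forall]
  exact dense_iInter_of_isOpen (fun i ↦ isOpen_setOf_range_inter_nonempty (hV i))
    fun i ↦ dense_setOf_range_inter_nonempty (hne i)

end Cp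

theorem statement17_general (X Y : Type*) [TopologicalSpace X] [Infinite (Clopens X)]
    [TopologicalSpace Y] (hBaire : BaireSpace (Cp X Y)) :
    ∀ V : ℕ → Set Y, (∀ m, IsOpen (V m)) → (∀ m, (V m).Nonempty) →
      ∃ f : X → Y, Continuous f ∧ ∀ m, (Set.range f ∩ V m).Nonempty := by
  intro V hV hne
  obtain ⟨y, -⟩ := hne 0
  have : Nonempty (Cp X Y) := ⟨⟨fun _ ↦ y, continuous_const⟩⟩
  obtain ⟨f, hf⟩ := (dense_setOf_forall_range_inter_nonempty (X := X) hV hne).nonempty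
  exact ⟨f.1, f.2, hf⟩

/-- Let `X` be an infinite totally disconnected (totally separated) Tychonoff space and
`Y` a space with `C_p(X, Y)` Baire. Then for every sequence `(V m)` of nonempty open
subsets of `Y` there is a continuous `f : X → Y` whose range meets every `V m`. -/
theorem statement17 (X Y : Type*) [TopologicalSpace X] [T1Space X] [CompletelyRegularSpace X]
    [TotallySeparatedSpace X] [Infinite X] [TopologicalSpace Y]
    (hBaire : BaireSpace (Cp X Y)) :
    ∀ V : ℕ → Set Y, (∀ m, IsOpen (V m)) → (∀ m, (V m).Nonempty) →
      ∃ f : X → Y, Continuous f ∧ ∀ m, (Set.range f ∩ V m).Nonempty := by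
  have : Infinite (Clopens X) := infinite_clopens_of_totallySeparatedSpace
  exact statement17_general X Y hBaire
end

section
/- Let K be a compact topological space, Y a Hausdorff space, and f : K → Y a continuous surjective irreducible map. Then f is almost open. -/
open Set Topology Function

/-- A map is almost open if the image of every nonempty open set has nonempty interior. -/
def AlmostOpenMap {K M : Type*} [TopologicalSpace K] [TopologicalSpace M] (ψ : K → M) : Prop :=
  ∀ U : Set K, IsOpen U → U.Nonempty → (interior (ψ '' U)).Nonempty

/-- A surjective map `f : X → Y` is irreducible if no proper closed subset of `X`
maps onto `Y`. -/
def IrreducibleMap {X Y : Type*} [TopologicalSpace X] [TopologicalSpace Y] (f : X → Y) : Prop :=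
  ∀ Z : Set X, IsClosed Z → f '' Z = Set.univ → Z = Set.univ

/-! For a nonempty open set `U`, the set `kernImage f U` of points whose whole fibre lies in `U` is
open because `f` is closed, nonempty because `f` is irreducible, and contained in the image of `U`
because `f` is surjective. -/

theorem kernImage_subset_image_of_surjective {α β : Type*} {f : α → β} (hf : Surjective f)
    (s : Set α) : kernImage f s ⊆ f '' s := by
  intro y hy
  obtain ⟨x, rfl⟩ := hf y
  exact mem_image_of_mem f (hy rfl)

theorem IrreducibleMap.kernImage_nonempty {X Y : Type*} [TopologicalSpace X] [TopologicalSpace Y]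
    {f : X → Y} (hf : IrreducibleMap f) {U : Set X} (hU : IsOpen U) (hne : U.Nonempty) :
    (kernImage f U).Nonempty := by
  rw [kernImage_eq_compl, nonempty_compl]
  intro himage
  exact hne.ne_empty (compl_univ_iff.mp (hf Uᶜ hU.isClosed_compl himage))

theorem statement19_general {X Y : Type*} [TopologicalSpace X] [TopologicalSpace Y] {f : X → Y}
    (hclosed : IsClosedMap f) (hsurj : Surjective f) (hirr : IrreducibleMap f) :
    AlmostOpenMap f := by
  intro U hU hne
  have hopen : IsOpen (kernImage f U) := isClosedMap_iff_kernImage.mp hclosed hU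
  have hsub : kernImage f U ⊆ f '' U := kernImage_subset_image_of_surjective hsurj U
  exact (hirr.kernImage_nonempty hU hne).mono (interior_maximal hsub hopen)

/-- A continuous surjective irreducible map from a compact space onto a Hausdorff space
is almost open. -/
theorem statement19 (K Y : Type*) [TopologicalSpace K] [CompactSpace K]
    [TopologicalSpace Y] [T2Space Y]
    (f : K → Y) (hcont : Continuous f) (hsurj : Surjective f) (hirr : IrreducibleMap f) :
    AlmostOpenMap f :=
  statement19_general hcont.isClosedMap hsurj hirr
end
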